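/- arXiv:math/0511401 — 3 statements merged into one kernel-verified Lean document; each statement's English description precedes it below -/
import Mathlib

section
/- Let c satisfy [H1] and [H2] and fix x ∈ ℝ. Suppose U₁, U₂ : ℝ × {k ∈ ℂ : Im k ≥ 0} → ℂ are such that for each k with Im k ≥ 0, U₁(·,k) is the Jost solution from +∞ at k and U₂(·,k) is the Jost solution from −∞ at k (both nowhere vanishing), and for each fixed x the maps k ↦ U₁(x,k), ∂ₓU₁(x,k), U₂(x,k), ∂ₓU₂(x,k) are holomorphic on {Im k > 0} and continuous on {Im k ≥ 0}. For k ≠ 0 with Im k ≥ 0 set w(x,k) = ∂ₓU₁(x,k)/(i k U₁(x,k)) and w₋(x,k) = −∂ₓU₂(x,k)/(i k U₂(x,k)). Then the function ℝ ∋ k ↦ (1/(1+k²)) · Re( 1/(w(x,k) + w₋(x,k)) ) is Lebesgue integrable on ℝ. -/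
open MeasureTheory Filter Topology

noncomputable section

/-- Hypothesis [H1]: `c` is essentially bounded below away from `0` and bounded above. -/
def HypH1 (c : ℝ → ℝ) : Prop :=
  ∃ c₀ > (0 : ℝ), ∃ cM > (0 : ℝ), ∀ᵐ x : ℝ, c₀ < c x ∧ c x ≤ cM

/-- Hypothesis [H1] with explicit constants `c₀`, `cM`. -/
def HypH1c (c : ℝ → ℝ) (c₀ cM : ℝ) : Prop :=
  0 < c₀ ∧ 0 < cM ∧ ∀ᵐ x : ℝ, c₀ < c x ∧ c x ≤ cM

/-- Hypothesis [H2]: `|c(x) - 1| ≤ C ⟨x⟩^{-1-δ}` almost everywhere. -/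
def HypH2 (c : ℝ → ℝ) : Prop :=
  ∃ C > (0 : ℝ), ∃ δ > (0 : ℝ),
    ∀ᵐ x : ℝ, |c x - 1| ≤ C * (1 + x ^ 2) ^ (-(1 + δ) / 2)

/-- `u` is continuously differentiable, its derivative is locally absolutely continuous,
and `u'' + (k²/c²) u = 0` holds almost everywhere (equivalently, the integral formulation
of the second-order equation holds). -/
def SolvesHelmholtz (c : ℝ → ℝ) (k : ℂ) (u : ℝ → ℂ) : Prop :=
  ContDiff ℝ 1 u ∧
  ∀ a b : ℝ, deriv u b = deriv u a + ∫ x in a..b, -(k ^ 2 / ((c x : ℂ) ^ 2)) * u x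

/-- The Jost solution from `+∞` at `k` : `e^{-ikx} u(x) → 1` as `x → +∞`. -/
def IsJostPlus (c : ℝ → ℝ) (k : ℂ) (u : ℝ → ℂ) : Prop :=
  SolvesHelmholtz c k u ∧
  Tendsto (fun x : ℝ => Complex.exp (-(Complex.I * k * (x : ℂ))) * u x) atTop (𝓝 1)

/-- The Jost solution from `-∞` at `k` : `e^{ikx} u(x) → 1` as `x → -∞`. -/
def IsJostMinus (c : ℝ → ℝ) (k : ℂ) (u : ℝ → ℂ) : Prop :=
  SolvesHelmholtz c k u ∧
  Tendsto (fun x : ℝ => Complex.exp (Complex.I * k * (x : ℂ)) * u x) atBot (𝓝 1)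

/-- `q = 1 - 1/c²`. -/
def qfun (c : ℝ → ℝ) (x : ℝ) : ℝ := 1 - 1 / (c x) ^ 2

/-- `Q = 1 - 1/c`. -/
def Qfun (c : ℝ → ℝ) (x : ℝ) : ℝ := 1 - 1 / c x

/-- Regularity in `k` of a family of solutions: holomorphy on the open upper half-plane
and continuity up to the real axis, for the solution and its `x`-derivative. -/
def JostFamilyRegular (U : ℂ → ℝ → ℂ) : Prop :=
  ∀ y : ℝ,
    DifferentiableOn ℂ (fun k => U k y) {k : ℂ | 0 < k.im} ∧
    ContinuousOn (fun k => U k y) {k : ℂ | 0 ≤ k.im} ∧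
    DifferentiableOn ℂ (fun k => deriv (U k) y) {k : ℂ | 0 < k.im} ∧
    ContinuousOn (fun k => deriv (U k) y) {k : ℂ | 0 ≤ k.im}

/-!
Write `w₊` and `w₋` for the two quotients. The flux `Re (conj u · u' / (i k))` of a solution `u`
decreases in `x`, losing `Im k` times the energy. For the Jost solution from `+∞` and `Im k > 0`
it tends to `0` at `+∞`, so it is positive everywhere. For real `k` it is constant, and the
constant is `1` because the phase of `e^{-ikx} u` converges. Hence `Re w₊ > 0`, and `Re w₋ > 0` by
reflection, so `(w₊ + w₋)⁻¹` is holomorphic with positive real part in the upper half-plane,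
continuous up to the real axis except at `k = 0`. Transported to the disc by the Cayley transform,
which turns `2 dk / (1 + k²)` into arc length, its real part has the same mean over all circles
about the centre, and Fatou's lemma bounds the integral of the boundary values.
-/

section Calculus

variable {E : Type*} [NormedAddCommGroup E] [NormedSpace ℝ E]

theorem mul_norm_le_of_norm_hasDerivWithinAt_sub_le {f f' : ℝ → E} {m : E} {a b M : ℝ}
    (hab : a ≤ b) (hf : ∀ x ∈ Set.Icc a b, HasDerivWithinAt f (f' x) (Set.Icc a b) x)
    (hM : ∀ x ∈ Set.Icc a b, ‖f' x - m‖ ≤ M) :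
    (b - a) * ‖m‖ ≤ ‖f b - f a‖ + M * (b - a) := by
  have hg : ∀ x ∈ Set.Icc a b,
      HasDerivWithinAt (fun y => f y - y • m) (f' x - m) (Set.Icc a b) x := fun x hx => by
    have h := (hf x hx).sub ((hasDerivWithinAt_id x _).smul_const m)
    rwa [one_smul] at h
  have hincr : ‖f b - f a - (b - a) • m‖ ≤ M * (b - a) := by
    have h := (convex_Icc a b).norm_image_sub_le_of_norm_hasDerivWithin_le hg hM
      (Set.left_mem_Icc.2 hab) (Set.right_mem_Icc.2 hab)
    rwa [Real.norm_of_nonneg (sub_nonneg.2 hab),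
      show f b - b • m - (f a - a • m) = f b - f a - (b - a) • m by module] at h
  calc (b - a) * ‖m‖ = ‖(f b - f a) - (f b - f a - (b - a) • m)‖ := by
        rw [sub_sub_cancel, norm_smul, Real.norm_of_nonneg (sub_nonneg.2 hab)]
    _ ≤ ‖f b - f a‖ + ‖f b - f a - (b - a) • m‖ := norm_sub_le _ _
    _ ≤ ‖f b - f a‖ + M * (b - a) := by gcongr

theorem eq_zero_of_tendsto_of_tendsto_hasDerivAt {f f' : ℝ → E} {l m : E}
    (hd : ∀ᶠ x in atTop, HasDerivAt f (f' x) x)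
    (hf : Tendsto f atTop (𝓝 l)) (hf' : Tendsto f' atTop (𝓝 m)) : m = 0 := by
  have hincr : Tendsto (fun x => ‖f (x + 1) - f x‖) atTop (𝓝 0) := by
    simpa using ((hf.comp (tendsto_atTop_add_const_right _ 1 tendsto_id)).sub hf).norm
  refine norm_le_zero_iff.1 (le_of_forall_pos_le_add fun ε hε => ?_)
  refine ge_of_tendsto (hincr.add_const ε) ?_
  have hclose : ∀ᶠ x in atTop, ‖f' x - m‖ ≤ ε := by
    filter_upwards [hf' (Metric.closedBall_mem_nhds m hε)] with x hx
    simpa [dist_eq_norm] using hx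
  obtain ⟨X, hX⟩ := eventually_atTop.1 (hd.and hclose)
  filter_upwards [eventually_ge_atTop X] with x hx
  simpa using mul_norm_le_of_norm_hasDerivWithinAt_sub_le (le_add_of_nonneg_right zero_le_one)
    (fun y hy => (hX y (hx.trans hy.1)).1.hasDerivWithinAt) fun y hy => (hX y (hx.trans hy.1)).2

theorem absolutelyContinuousOnInterval_comp_of_lipschitzWith {X Y : Type*}
    [PseudoMetricSpace X] [PseudoMetricSpace Y] {K : NNReal} {g : X → Y} {f : ℝ → X} {a b : ℝ}
    (hg : LipschitzWith K g) (hf : AbsolutelyContinuousOnInterval f a b) :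
    AbsolutelyContinuousOnInterval (g ∘ f) a b := by
  unfold AbsolutelyContinuousOnInterval at hf ⊢
  refine squeeze_zero (fun _ => Finset.sum_nonneg fun _ _ => dist_nonneg) (fun I => ?_)
    (by simpa using hf.const_mul (K : ℝ))
  rw [Finset.mul_sum]
  exact Finset.sum_le_sum fun i _ => hg.dist_le_mul _ _

theorem locallyIntegrable_inv_sq_smul {X : Type*} [TopologicalSpace X]
    [SecondCountableTopology X] [MeasurableSpace X] {μ : Measure X} {f : X → E} {c : X → ℝ}
    {c₀ : ℝ} (hc₀ : 0 < c₀) (hmeas : AEMeasurable c μ) (hc : ∀ᵐ x ∂μ, c₀ ≤ c x)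
    (hf : LocallyIntegrable f μ) :
    LocallyIntegrable (fun x => (c x ^ 2)⁻¹ • f x) μ := by
  refine (hf.smul (c₀ ^ 2)⁻¹).mono
    ((hmeas.pow_const 2).inv.aestronglyMeasurable.smul hf.aestronglyMeasurable) ?_
  filter_upwards [hc] with x hx
  have hcx : 0 < c x := hc₀.trans_le hx
  rw [Pi.smul_apply, norm_smul, norm_smul, Real.norm_of_nonneg (by positivity),
    Real.norm_of_nonneg (by positivity)]
  gcongr

end Calculus

section Flux

open ComplexConjugate

/-- The energy flux `Re (conj u · u' / (i k))` of `u` at wavenumber `k`. For real `k ≠ 0` it is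
the Wronskian of `conj u` and `u` divided by `2 i k`. -/
def helmholtzFlux (k : ℂ) (u : ℝ → ℂ) (x : ℝ) : ℝ :=
  ((Complex.I * k)⁻¹ * (conj (u x) * deriv u x)).re

/-- The energy density of `u` at wavenumber `k` in a medium with wave speed `c`, normalized so that
`Im k` times its integral is the flux lost by a solution. -/
def helmholtzEnergy (c : ℝ → ℝ) (k : ℂ) (u : ℝ → ℂ) (x : ℝ) : ℝ :=
  ‖deriv u x‖ ^ 2 / ‖k‖ ^ 2 + ‖u x‖ ^ 2 / c x ^ 2

/-- The normalized logarithmic derivative `u' / (i k u)`, equal to `1` for `u = e^{ikx}`. It is `w`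
for the Jost solution from `+∞`, and `-w₋` for the Jost solution from `-∞`. -/
def normalizedLogDeriv (k : ℂ) (u : ℝ → ℂ) (x : ℝ) : ℂ :=
  deriv u x / (Complex.I * k * u x)

theorem re_normalizedLogDeriv (k : ℂ) (u : ℝ → ℂ) (x : ℝ) :
    (normalizedLogDeriv k u x).re = helmholtzFlux k u x / ‖u x‖ ^ 2 := by
  have hfactor : normalizedLogDeriv k u x =
      (Complex.I * k)⁻¹ * (conj (u x) * deriv u x) * (((‖u x‖ ^ 2)⁻¹ : ℝ) : ℂ) := by
    rw [normalizedLogDeriv, div_eq_mul_inv, mul_inv, Complex.inv_def (u x),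
      Complex.normSq_eq_norm_sq]
    ring
  rw [hfactor, Complex.re_mul_ofReal, ← div_eq_mul_inv, helmholtzFlux]

theorem normalizedLogDeriv_comp_neg (k : ℂ) (u : ℝ → ℂ) (x : ℝ) :
    normalizedLogDeriv k (fun y => u (-y)) x = -normalizedLogDeriv k u (-x) := by
  rw [normalizedLogDeriv, normalizedLogDeriv, deriv_comp_neg, neg_div]

theorem helmholtzEnergy_nonneg (c : ℝ → ℝ) (k : ℂ) (u : ℝ → ℂ) (x : ℝ) :
    0 ≤ helmholtzEnergy c k u x := by
  unfold helmholtzEnergy; positivity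

theorem helmholtzEnergy_pos {c : ℝ → ℝ} {u : ℝ → ℂ} {x : ℝ} (k : ℂ) (hc : 0 < c x)
    (hu : u x ≠ 0) : 0 < helmholtzEnergy c k u x := by
  unfold helmholtzEnergy; positivity

theorem hasDerivAt_helmholtzFlux {u : ℝ → ℂ} {k : ℂ} {s x : ℝ}
    (hu : HasDerivAt u (deriv u x) x) (hu' : HasDerivAt (deriv u) (-(k ^ 2 / s ^ 2) * u x) x) :
    HasDerivAt (helmholtzFlux k u)
      (-(k.im * (‖deriv u x‖ ^ 2 / ‖k‖ ^ 2 + ‖u x‖ ^ 2 / s ^ 2))) x := by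
  have hflux := Complex.reCLM.hasFDerivAt.comp_hasDerivAt x
    ((hu.star.mul hu').const_mul (Complex.I * k)⁻¹)
  refine hflux.congr_deriv ?_
  have hre : ((Complex.I * k)⁻¹).re = -k.im / ‖k‖ ^ 2 := by
    simp [Complex.inv_re, Complex.normSq_eq_norm_sq]
  have hre_sq : ((Complex.I * k)⁻¹ * k ^ 2).re = k.im := by
    have : (Complex.I * k)⁻¹ * k ^ 2 = -Complex.I * k := by
      rw [mul_inv, Complex.inv_I]
      rcases eq_or_ne k 0 with rfl | hk
      · simp
      · field_simp
    rw [this]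
    simp
  have hexpand : (Complex.I * k)⁻¹ *
        (conj (deriv u x) * deriv u x + conj (u x) * (-(k ^ 2 / s ^ 2) * u x)) =
      (Complex.I * k)⁻¹ * ((‖deriv u x‖ ^ 2 : ℝ) : ℂ) -
        (Complex.I * k)⁻¹ * k ^ 2 * ((‖u x‖ ^ 2 / s ^ 2 : ℝ) : ℂ) := by
    push_cast
    rw [← Complex.conj_mul', ← Complex.conj_mul']
    ring
  change ((Complex.I * k)⁻¹ *
    (conj (deriv u x) * deriv u x + conj (u x) * (-(k ^ 2 / s ^ 2) * u x))).re = _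
  rw [hexpand, Complex.sub_re, Complex.re_mul_ofReal, Complex.re_mul_ofReal, hre, hre_sq]
  ring

end Flux

namespace SolvesHelmholtz

open ComplexConjugate

variable {c : ℝ → ℝ} {c₀ : ℝ} {k : ℂ} {u : ℝ → ℂ}

theorem hasDerivAt (hu : SolvesHelmholtz c k u) (x : ℝ) : HasDerivAt u (deriv u x) x :=
  (hu.1.differentiable one_ne_zero x).hasDerivAt

theorem norm_deriv_sub_le (hu : SolvesHelmholtz c k u) (hc₀ : 0 < c₀) (hc : ∀ᵐ x, c₀ ≤ c x)
    {a b B : ℝ} (hB : ∀ x ∈ Set.uIcc a b, ‖u x‖ ≤ B) :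
    ‖deriv u b - deriv u a‖ ≤ ‖k‖ ^ 2 / c₀ ^ 2 * B * |b - a| := by
  rw [hu.2 a b, add_sub_cancel_left]
  refine intervalIntegral.norm_integral_le_of_norm_le_const_ae ?_
  filter_upwards [hc] with x hx hxab
  have huB := hB x (Set.uIoc_subset_uIcc hxab)
  rw [norm_mul, norm_neg, norm_div, norm_pow, norm_pow, Complex.norm_real, Real.norm_eq_abs,
    sq_abs]
  gcongr

theorem exists_lipschitzOnWith_deriv (hu : SolvesHelmholtz c k u) (hc₀ : 0 < c₀)
    (hc : ∀ᵐ x, c₀ ≤ c x) (a b : ℝ) : ∃ K, LipschitzOnWith K (deriv u) (Set.uIcc a b) := by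
  obtain ⟨B, hB⟩ := (isCompact_uIcc (a := a) (b := b)).exists_bound_of_continuousOn
    hu.1.continuous.continuousOn
  refine ⟨Real.toNNReal (‖k‖ ^ 2 / c₀ ^ 2 * B), LipschitzOnWith.of_dist_le_mul fun x hx y hy => ?_⟩
  rw [dist_eq_norm, dist_eq_norm, Real.norm_eq_abs]
  refine (hu.norm_deriv_sub_le hc₀ hc fun z hz => hB z (Set.uIcc_subset_uIcc hy hx hz)).trans ?_
  gcongr
  exact Real.le_coe_toNNReal _

theorem ae_hasDerivAt_deriv (hu : SolvesHelmholtz c k u) (hc₀ : 0 < c₀) (hmeas : AEMeasurable c)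
    (hc : ∀ᵐ x, c₀ ≤ c x) :
    ∀ᵐ x, HasDerivAt (deriv u) (-(k ^ 2 / (c x : ℂ) ^ 2) * u x) x := by
  have hcont : Continuous fun x => -k ^ 2 * u x := continuous_const.mul hu.1.continuous
  have hint : LocallyIntegrable (fun x => -(k ^ 2 / (c x : ℂ) ^ 2) * u x) volume := by
    refine (locallyIntegrable_inv_sq_smul hc₀ hmeas hc hcont.locallyIntegrable).congr
      (Eventually.of_forall fun x => ?_)
    simp only [Complex.real_smul]
    push_cast
    ring
  filter_upwards [LocallyIntegrable.ae_hasDerivAt_integral hint] with x hx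
  exact ((hx 0).const_add (deriv u 0)).congr_of_eventuallyEq (Eventually.of_forall (hu.2 0))

theorem absolutelyContinuousOnInterval_helmholtzFlux (hu : SolvesHelmholtz c k u) (hc₀ : 0 < c₀)
    (hc : ∀ᵐ x, c₀ ≤ c x) (a b : ℝ) :
    AbsolutelyContinuousOnInterval (helmholtzFlux k u) a b := by
  obtain ⟨K, hK⟩ := hu.exists_lipschitzOnWith_deriv hc₀ hc a b
  have hconj : AbsolutelyContinuousOnInterval (fun x => conj (u x)) a b :=
    absolutelyContinuousOnInterval_comp_of_lipschitzWith Complex.conjLIE.lipschitz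
      hu.1.contDiffOn.absolutelyContinuousOnInterval
  exact absolutelyContinuousOnInterval_comp_of_lipschitzWith Complex.reCLM.lipschitz
    ((hconj.fun_smul hK.absolutelyContinuousOnInterval).const_smul (Complex.I * k)⁻¹)

theorem intervalIntegrable_helmholtzEnergy (hu : SolvesHelmholtz c k u) (hc₀ : 0 < c₀)
    (hmeas : AEMeasurable c) (hc : ∀ᵐ x, c₀ ≤ c x) (a b : ℝ) :
    IntervalIntegrable (helmholtzEnergy c k u) volume a b := by
  have hderiv : Continuous fun x => ‖deriv u x‖ ^ 2 / ‖k‖ ^ 2 :=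
    ((hu.1.continuous_deriv le_rfl).norm.pow 2).div_const _
  refine hderiv.intervalIntegrable a b |>.add ?_
  have hpot : LocallyIntegrable (fun x => ‖u x‖ ^ 2 / c x ^ 2) volume := by
    simp_rw [div_eq_inv_mul]
    exact locallyIntegrable_inv_sq_smul hc₀ hmeas hc (hu.1.continuous.norm.pow 2).locallyIntegrable
  exact intervalIntegrable_iff.2
    ((hpot.integrableOn_isCompact isCompact_uIcc).mono_set Set.uIoc_subset_uIcc)

theorem helmholtzFlux_sub (hu : SolvesHelmholtz c k u) (hc₀ : 0 < c₀) (hmeas : AEMeasurable c)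
    (hc : ∀ᵐ x, c₀ ≤ c x) (a b : ℝ) :
    helmholtzFlux k u a - helmholtzFlux k u b = k.im * ∫ x in a..b, helmholtzEnergy c k u x := by
  rw [← neg_sub,
    ← (hu.absolutelyContinuousOnInterval_helmholtzFlux hc₀ hc a b).integral_deriv_eq_sub,
    ← intervalIntegral.integral_neg, ← intervalIntegral.integral_const_mul]
  refine intervalIntegral.integral_congr_ae ?_
  filter_upwards [hu.ae_hasDerivAt_deriv hc₀ hmeas hc] with x hx _
  rw [(hasDerivAt_helmholtzFlux (hu.hasDerivAt x) hx).deriv, neg_neg, helmholtzEnergy]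

theorem antitone_helmholtzFlux (hu : SolvesHelmholtz c k u) (hc₀ : 0 < c₀)
    (hmeas : AEMeasurable c) (hc : ∀ᵐ x, c₀ ≤ c x) (hk : 0 ≤ k.im) :
    Antitone (helmholtzFlux k u) := fun a b hab => by
  rw [← sub_nonneg, hu.helmholtzFlux_sub hc₀ hmeas hc]
  exact mul_nonneg hk (intervalIntegral.integral_nonneg hab fun x _ =>
    helmholtzEnergy_nonneg c k u x)

theorem helmholtzFlux_lt (hu : SolvesHelmholtz c k u) (hc₀ : 0 < c₀) (hmeas : AEMeasurable c)
    (hc : ∀ᵐ x, c₀ ≤ c x) (hk : 0 < k.im) {a b : ℝ} (hab : a < b)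
    (hne : ∀ x ∈ Set.Ioc a b, u x ≠ 0) : helmholtzFlux k u b < helmholtzFlux k u a := by
  rw [← sub_pos, hu.helmholtzFlux_sub hc₀ hmeas hc]
  refine mul_pos hk ((intervalIntegral.integral_pos_iff_support_of_nonneg_ae
    (Eventually.of_forall (helmholtzEnergy_nonneg c k u))
    (hu.intervalIntegrable_helmholtzEnergy hc₀ hmeas hc a b)).2 ⟨hab, ?_⟩)
  have hsupp : (Set.Ioc a b : Set ℝ) ≤ᵐ[volume]
      (Function.support (helmholtzEnergy c k u) ∩ Set.Ioc a b : Set ℝ) := by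
    filter_upwards [hc] with x hx hxab
    exact ⟨(helmholtzEnergy_pos k (hc₀.trans_le hx) (hne x hxab)).ne', hxab⟩
  refine lt_of_lt_of_le ?_ (measure_mono_ae hsupp)
  simpa using hab

theorem tendsto_deriv_zero (hu : SolvesHelmholtz c k u) (hc₀ : 0 < c₀) (hc : ∀ᵐ x, c₀ ≤ c x)
    (hlim : Tendsto u atTop (𝓝 0)) : Tendsto (deriv u) atTop (𝓝 0) := by
  set A := ‖k‖ ^ 2 / c₀ ^ 2
  have hA : 0 ≤ A := by positivity
  refine Metric.tendsto_atTop.2 fun ε hε => ?_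
  have hB : 0 < ε / (3 + A) := by positivity
  obtain ⟨X, hX⟩ := Metric.tendsto_atTop.1 hlim (ε / (3 + A)) hB
  refine ⟨X, fun x hx => ?_⟩
  have hu_le : ∀ y ∈ Set.Icc x (x + 1), ‖u y‖ ≤ ε / (3 + A) := fun y hy => by
    simpa using (hX y (hx.trans hy.1)).le
  have hu'_le : ∀ y ∈ Set.Icc x (x + 1), ‖deriv u y - deriv u x‖ ≤ A * (ε / (3 + A)) :=
    fun y hy => by
      refine (hu.norm_deriv_sub_le hc₀ hc fun z hz => hu_le z ?_).trans ?_
      · rw [Set.uIcc_of_le hy.1] at hz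
        exact ⟨hz.1, hz.2.trans hy.2⟩
      · rw [abs_of_nonneg (by linarith [hy.1])]
        exact mul_le_of_le_one_right (by positivity) (by linarith [hy.2])
  rw [dist_zero_right]
  calc ‖deriv u x‖ ≤ ‖u (x + 1) - u x‖ + A * (ε / (3 + A)) := by
        simpa using mul_norm_le_of_norm_hasDerivWithinAt_sub_le
          (le_add_of_nonneg_right zero_le_one) (fun y _ => (hu.hasDerivAt y).hasDerivWithinAt)
          hu'_le
    _ ≤ ε / (3 + A) + ε / (3 + A) + A * (ε / (3 + A)) := by
        gcongr
        exact (norm_sub_le _ _).trans (add_le_add (hu_le _ (by simp)) (hu_le _ (by simp)))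
    _ = ε - ε / (3 + A) := by field_simp; ring
    _ < ε := sub_lt_self _ hB

end SolvesHelmholtz

theorem hasDerivAt_log_exp_mul {k : ℂ} {u : ℝ → ℂ} {x : ℝ} (hk : k ≠ 0)
    (hu : DifferentiableAt ℝ u x)
    (hx : Complex.exp (-(Complex.I * k * x)) * u x ∈ Complex.slitPlane) :
    HasDerivAt (fun y : ℝ =>
        (Complex.I * k)⁻¹ * Complex.log (Complex.exp (-(Complex.I * k * y)) * u y))
      (normalizedLogDeriv k u x - 1) x := by
  have hux : u x ≠ 0 := right_ne_zero_of_mul (Complex.slitPlane_ne_zero hx)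
  have hexp : Complex.exp (-(Complex.I * k * x)) ≠ 0 := Complex.exp_ne_zero _
  have hphase : HasDerivAt (fun y : ℝ => Complex.exp (-(Complex.I * k * y)))
      (Complex.exp (-(Complex.I * k * x)) * -(Complex.I * k)) x := by
    simpa using (((hasDerivAt_id x).ofReal_comp.const_mul (Complex.I * k)).neg).cexp
  refine (((hphase.mul hu.hasDerivAt).clog_real hx).const_mul (Complex.I * k)⁻¹).congr_deriv ?_
  rw [normalizedLogDeriv]
  simp only [Pi.mul_apply]
  field_simp
  ring

namespace IsJostPlus

variable {c : ℝ → ℝ} {c₀ : ℝ} {k : ℂ} {u : ℝ → ℂ}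

theorem eventually_ne_zero (hu : IsJostPlus c k u) : ∀ᶠ x in atTop, u x ≠ 0 :=
  (hu.2.eventually_ne one_ne_zero).mono fun _ => right_ne_zero_of_mul

theorem tendsto_zero (hu : IsJostPlus c k u) (hk : 0 < k.im) : Tendsto u atTop (𝓝 0) := by
  have hexp : Tendsto (fun x : ℝ => Complex.exp (Complex.I * k * x)) atTop (𝓝 0) := by
    refine Complex.tendsto_exp_comap_re_atBot.comp (tendsto_comap_iff.2 ?_)
    refine (tendsto_neg_atTop_atBot.comp (tendsto_id.const_mul_atTop hk)).congr fun x => ?_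
    simp
  refine (mul_one (0 : ℂ) ▸ hexp.mul hu.2).congr fun x => ?_
  rw [Complex.exp_neg, mul_inv_cancel_left₀ (Complex.exp_ne_zero _)]

theorem tendsto_helmholtzFlux_zero (hu : IsJostPlus c k u) (hc₀ : 0 < c₀) (hc : ∀ᵐ x, c₀ ≤ c x)
    (hk : 0 < k.im) : Tendsto (helmholtzFlux k u) atTop (𝓝 0) := by
  have hlim := hu.tendsto_zero hk
  have hprod := (((Complex.continuous_conj.tendsto 0).comp hlim).mul
    (hu.1.tendsto_deriv_zero hc₀ hc hlim)).const_mul (Complex.I * k)⁻¹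
  rw [map_zero, zero_mul, mul_zero] at hprod
  exact (Complex.continuous_re.tendsto 0).comp hprod

theorem helmholtzFlux_pos_of_im_pos (hu : IsJostPlus c k u) (hc₀ : 0 < c₀)
    (hmeas : AEMeasurable c) (hc : ∀ᵐ x, c₀ ≤ c x) (hk : 0 < k.im) (x : ℝ) :
    0 < helmholtzFlux k u x := by
  have hanti := hu.1.antitone_helmholtzFlux hc₀ hmeas hc hk.le
  obtain ⟨X, hX⟩ := eventually_atTop.1 hu.eventually_ne_zero
  set y := max x X
  calc 0 ≤ helmholtzFlux k u (y + 1) :=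
        hanti.le_of_tendsto (hu.tendsto_helmholtzFlux_zero hc₀ hc hk) _
    _ < helmholtzFlux k u y := hu.1.helmholtzFlux_lt hc₀ hmeas hc hk (lt_add_one y)
        fun z hz => hX z ((le_max_right x X).trans hz.1.le)
    _ ≤ helmholtzFlux k u x := hanti (le_max_left x X)

theorem tendsto_norm_one (hu : IsJostPlus c k u) (hk : k.im = 0) :
    Tendsto (fun x => ‖u x‖) atTop (𝓝 1) := by
  refine (norm_one (α := ℂ) ▸ hu.2.norm).congr fun x => ?_
  simp [Complex.norm_exp, hk]

theorem helmholtzFlux_eq_one (hu : IsJostPlus c k u) (hc₀ : 0 < c₀) (hmeas : AEMeasurable c)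
    (hc : ∀ᵐ x, c₀ ≤ c x) (hk : k.im = 0) (hk₀ : k ≠ 0) (x : ℝ) : helmholtzFlux k u x = 1 := by
  have hconst : ∀ y, helmholtzFlux k u y = helmholtzFlux k u x := fun y => by
    rw [← sub_eq_zero, hu.1.helmholtzFlux_sub hc₀ hmeas hc, hk, zero_mul]
  set v : ℝ → ℂ := fun y => Complex.exp (-(Complex.I * k * y)) * u y
  have hphase : Tendsto (fun y => ((Complex.I * k)⁻¹ * Complex.log (v y)).re) atTop (𝓝 0) := by
    have hlog := (hu.2.clog Complex.one_mem_slitPlane).const_mul (Complex.I * k)⁻¹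
    rw [Complex.log_one, mul_zero] at hlog
    exact (Complex.continuous_re.tendsto 0).comp hlog
  have hderiv : ∀ᶠ y in atTop, HasDerivAt (fun y => ((Complex.I * k)⁻¹ * Complex.log (v y)).re)
      (normalizedLogDeriv k u y - 1).re y := by
    filter_upwards [hu.2 (Complex.isOpen_slitPlane.mem_nhds Complex.one_mem_slitPlane)] with y hy
    exact Complex.reCLM.hasFDerivAt.comp_hasDerivAt y
      (hasDerivAt_log_exp_mul hk₀ (hu.1.hasDerivAt y).differentiableAt hy)
  have hlim : Tendsto (fun y => (normalizedLogDeriv k u y - 1).re) atTop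
      (𝓝 (helmholtzFlux k u x - 1)) := by
    simp_rw [Complex.sub_re, re_normalizedLogDeriv, hconst, Complex.one_re]
    simpa using
      (tendsto_const_nhds.div ((hu.tendsto_norm_one hk).pow 2) (by norm_num)).sub_const (1 : ℝ)
  exact sub_eq_zero.1 (eq_zero_of_tendsto_of_tendsto_hasDerivAt hderiv hphase hlim)

theorem helmholtzFlux_pos (hu : IsJostPlus c k u) (hc₀ : 0 < c₀) (hmeas : AEMeasurable c)
    (hc : ∀ᵐ x, c₀ ≤ c x) (hk : 0 ≤ k.im) (hk₀ : k ≠ 0) (x : ℝ) : 0 < helmholtzFlux k u x := by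
  rcases hk.eq_or_lt with him | him
  · exact hu.helmholtzFlux_eq_one hc₀ hmeas hc him.symm hk₀ x ▸ one_pos
  · exact hu.helmholtzFlux_pos_of_im_pos hc₀ hmeas hc him x

theorem ne_zero (hu : IsJostPlus c k u) (hc₀ : 0 < c₀) (hmeas : AEMeasurable c)
    (hc : ∀ᵐ x, c₀ ≤ c x) (hk : 0 ≤ k.im) (hk₀ : k ≠ 0) (x : ℝ) : u x ≠ 0 := fun hx =>
  (hu.helmholtzFlux_pos hc₀ hmeas hc hk hk₀ x).ne' (by simp [helmholtzFlux, hx])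

theorem re_normalizedLogDeriv_pos (hu : IsJostPlus c k u) (hc₀ : 0 < c₀) (hmeas : AEMeasurable c)
    (hc : ∀ᵐ x, c₀ ≤ c x) (hk : 0 ≤ k.im) (hk₀ : k ≠ 0) (x : ℝ) :
    0 < (normalizedLogDeriv k u x).re := by
  rw [re_normalizedLogDeriv]
  exact div_pos (hu.helmholtzFlux_pos hc₀ hmeas hc hk hk₀ x)
    (pow_pos (norm_pos_iff.2 (hu.ne_zero hc₀ hmeas hc hk hk₀ x)) 2)

end IsJostPlus

namespace IsJostMinus

variable {c : ℝ → ℝ} {c₀ : ℝ} {k : ℂ} {u : ℝ → ℂ}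

theorem comp_neg (hu : IsJostMinus c k u) :
    IsJostPlus (fun x => c (-x)) k (fun x => u (-x)) := by
  refine ⟨⟨hu.1.1.comp contDiff_neg, fun a b => ?_⟩, ?_⟩
  · rw [deriv_comp_neg, deriv_comp_neg,
      intervalIntegral.integral_comp_neg fun x => -(k ^ 2 / (c x : ℂ) ^ 2) * u x,
      hu.1.2 (-b) (-a)]
    ring
  · exact (hu.2.comp tendsto_neg_atTop_atBot).congr fun x => by simp

theorem ne_zero (hu : IsJostMinus c k u) (hc₀ : 0 < c₀) (hmeas : AEMeasurable c)
    (hc : ∀ᵐ x, c₀ ≤ c x) (hk : 0 ≤ k.im) (hk₀ : k ≠ 0) (x : ℝ) : u x ≠ 0 := by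
  have hneg := (Measure.measurePreserving_neg (volume : Measure ℝ)).quasiMeasurePreserving
  simpa using hu.comp_neg.ne_zero hc₀ (hmeas.comp_quasiMeasurePreserving hneg) (hneg.ae hc)
    hk hk₀ (-x)

theorem re_normalizedLogDeriv_neg (hu : IsJostMinus c k u) (hc₀ : 0 < c₀)
    (hmeas : AEMeasurable c) (hc : ∀ᵐ x, c₀ ≤ c x) (hk : 0 ≤ k.im) (hk₀ : k ≠ 0) (x : ℝ) :
    (normalizedLogDeriv k u x).re < 0 := by
  have hneg := (Measure.measurePreserving_neg (volume : Measure ℝ)).quasiMeasurePreserving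
  have hpos := hu.comp_neg.re_normalizedLogDeriv_pos hc₀
    (hmeas.comp_quasiMeasurePreserving hneg) (hneg.ae hc) hk hk₀ (-x)
  rwa [normalizedLogDeriv_comp_neg, neg_neg, Complex.neg_re, neg_pos] at hpos

end IsJostMinus

theorem re_normalizedLogDeriv_sub_pos {c : ℝ → ℝ} {c₀ : ℝ} {k : ℂ} {u₁ u₂ : ℝ → ℂ}
    (hu₁ : IsJostPlus c k u₁) (hu₂ : IsJostMinus c k u₂) (hc₀ : 0 < c₀) (hmeas : AEMeasurable c)
    (hc : ∀ᵐ x, c₀ ≤ c x) (hk : 0 ≤ k.im) (hk₀ : k ≠ 0) (x : ℝ) :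
    0 < (normalizedLogDeriv k u₁ x - normalizedLogDeriv k u₂ x).re :=
  sub_pos.2 ((hu₂.re_normalizedLogDeriv_neg hc₀ hmeas hc hk hk₀ x).trans
    (hu₁.re_normalizedLogDeriv_pos hc₀ hmeas hc hk hk₀ x))

section Disc

theorem integral_re_circleMap {f : ℂ → ℂ} {z : ℂ} {r : ℝ}
    (hf : DifferentiableOn ℂ f (Metric.closedBall z |r|)) (a : ℝ) :
    ∫ θ in a..a + 2 * Real.pi, (f (circleMap z r θ)).re = 2 * Real.pi * (f z).re := by
  have hcirc : CircleIntegrable f z r :=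
    (hf.continuousOn.mono Metric.sphere_subset_closedBall).circleIntegrable'
  have hmean := Complex.reCLM.circleAverage_comp_comm hcirc
  rw [(hf.diffContOnCl_ball subset_rfl).circleAverage, Real.circleAverage_eq_integral_add a,
    intervalIntegral.integral_comp_add_right fun θ => (Complex.reCLM ∘ f) (circleMap z r θ),
    inv_smul_eq_iff₀ (by positivity), zero_add, add_comm (2 * Real.pi)] at hmean
  exact hmean

theorem integrableOn_of_tendsto_re_circleMap {f : ℂ → ℂ} {z : ℂ} {R : ℝ} (hR : 0 < R)
    (hf : DifferentiableOn ℂ f (Metric.ball z R)) (hpos : ∀ w ∈ Metric.ball z R, 0 ≤ (f w).re)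
    {a : ℝ} {b : ℝ → ℝ}
    (hb : ∀ᵐ θ ∂volume.restrict (Set.Ioc a (a + 2 * Real.pi)),
      Tendsto (fun r => (f (circleMap z r θ)).re) (𝓝[<] R) (𝓝 (b θ))) :
    IntegrableOn b (Set.Ioc a (a + 2 * Real.pi)) := by
  obtain ⟨r, -, hr, hlim⟩ := exists_seq_strictMono_tendsto' hR
  have hball : ∀ n, Metric.closedBall z |r n| ⊆ Metric.ball z R := fun n =>
    Metric.closedBall_subset_ball (by rw [abs_of_pos (hr n).1]; exact (hr n).2)
  have hmem : ∀ n θ, circleMap z (r n) θ ∈ Metric.ball z R := fun n θ =>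
    hball n (Metric.sphere_subset_closedBall (circleMap_mem_sphere' z (r n) θ))
  have hcont : ∀ n, Continuous fun θ => (f (circleMap z (r n) θ)).re := fun n =>
    Complex.continuous_re.comp
      (hf.continuousOn.comp_continuous (continuous_circleMap z (r n)) (hmem n))
  have hmass : ∀ n, ∫⁻ θ in Set.Ioc a (a + 2 * Real.pi), ‖(f (circleMap z (r n) θ)).re‖ₑ =
      ENNReal.ofReal (2 * Real.pi * (f z).re) := fun n => by
    rw [← integral_re_circleMap (hf.mono (hball n)) a,
      intervalIntegral.integral_of_le (by linarith [Real.pi_pos]),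
      ← ofReal_integral_norm_eq_lintegral_enorm (hcont n).integrableOn_Ioc]
    simp_rw [Real.norm_of_nonneg (hpos _ (hmem n _))]
  refine integrable_of_tendsto ?_ (fun n => (hcont n).aestronglyMeasurable) ?_
  · filter_upwards [hb] with θ hθ
    exact hθ.comp (tendsto_nhdsWithin_iff.2 ⟨hlim, Eventually.of_forall fun n => (hr n).2⟩)
  · simp_rw [hmass, liminf_const]
    exact ENNReal.ofReal_ne_top

end Disc

section HalfPlane

theorem range_two_mul_arctan :
    Set.range (fun t => 2 * Real.arctan t) = Set.Ioo (-Real.pi) Real.pi := by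
  rw [Set.range_comp' (2 * ·) Real.arctan, Real.range_arctan, Set.image_mul_left_Ioo two_pos]
  congr 1 <;> ring

theorem hasDerivAt_two_mul_arctan (t : ℝ) :
    HasDerivAt (fun t => 2 * Real.arctan t) (2 * (1 + t ^ 2)⁻¹) t := by
  simpa using (Real.hasDerivAt_arctan t).const_mul 2

theorem integrable_comp_two_mul_arctan_iff {E : Type*} [NormedAddCommGroup E] [NormedSpace ℝ E]
    {b : ℝ → E} :
    Integrable (fun t => (1 + t ^ 2)⁻¹ • b (2 * Real.arctan t)) ↔
      IntegrableOn b (Set.Ioo (-Real.pi) Real.pi) := by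
  rw [← range_two_mul_arctan, ← Set.image_univ,
    integrableOn_image_iff_integrableOn_abs_deriv_smul MeasurableSet.univ
      (fun t _ => (hasDerivAt_two_mul_arctan t).hasDerivWithinAt)
      (fun s _ t _ h => Real.arctan_injective (mul_left_cancel₀ two_ne_zero h)),
    integrableOn_univ]
  have habs : ∀ t : ℝ, |2 * (1 + t ^ 2)⁻¹| = 2 * (1 + t ^ 2)⁻¹ := fun t =>
    abs_of_nonneg (by positivity)
  simp_rw [habs, mul_smul]
  exact (integrable_smul_iff two_ne_zero _).symm

theorem ae_restrict_tan_half_of_ae {p : ℝ → Prop} (hp : ∀ᵐ t, p t) :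
    ∀ᵐ θ ∂volume.restrict (Set.Ioo (-Real.pi) Real.pi), p (Real.tan (θ / 2)) := by
  have hnull : volume ((fun t => 2 * Real.arctan t) '' {t | ¬ p t}) = 0 :=
    addHaar_image_eq_zero_of_differentiableOn_of_addHaar_eq_zero volume
      (fun t _ => (hasDerivAt_two_mul_arctan t).differentiableAt.differentiableWithinAt) hp
  refine (ae_restrict_iff' measurableSet_Ioo).2 ?_
  filter_upwards [measure_eq_zero_iff_ae_notMem.1 hnull] with θ hθ hmem
  by_contra hpθ
  refine hθ ⟨_, hpθ, ?_⟩
  dsimp only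
  rw [Real.arctan_tan (by linarith [hmem.1]) (by linarith [hmem.2])]
  ring

/-- The Cayley transform `z ↦ i (1 - z) / (1 + z)`, which maps the unit disc onto the upper
half-plane, `0` to `i` and `e^{iθ}` to `tan (θ / 2)`. -/
def cayleyTransform (z : ℂ) : ℂ :=
  Complex.I * (1 - z) / (1 + z)

theorem differentiableAt_cayleyTransform {z : ℂ} (hz : 1 + z ≠ 0) :
    DifferentiableAt ℂ cayleyTransform z := by
  unfold cayleyTransform
  fun_prop (disch := assumption)

theorem im_cayleyTransform (z : ℂ) :
    (cayleyTransform z).im = (1 - ‖z‖ ^ 2) / ‖1 + z‖ ^ 2 := by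
  rw [cayleyTransform, Complex.div_im, ← Complex.normSq_eq_norm_sq, ← Complex.normSq_eq_norm_sq,
    ← sub_div]
  congr 1
  simp only [Complex.mul_im, Complex.I_re, Complex.I_im, Complex.sub_re, Complex.sub_im,
    Complex.add_re, Complex.add_im, Complex.mul_re, Complex.one_re, Complex.one_im,
    Complex.normSq_apply]
  ring

theorem one_add_ne_zero_of_norm_lt_one {z : ℂ} (hz : ‖z‖ < 1) : 1 + z ≠ 0 := fun h => by
  simp [eq_neg_of_add_eq_zero_right h] at hz

theorem im_cayleyTransform_pos {z : ℂ} (hz : ‖z‖ < 1) : 0 < (cayleyTransform z).im := by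
  rw [im_cayleyTransform]
  have := norm_pos_iff.2 (one_add_ne_zero_of_norm_lt_one hz)
  have : ‖z‖ ^ 2 < 1 := by nlinarith [norm_nonneg z]
  exact div_pos (by linarith) (by positivity)

theorem one_add_circleMap (θ : ℝ) :
    1 + circleMap 0 1 θ = Complex.exp (θ / 2 * Complex.I) * (2 * Complex.cos (θ / 2)) := by
  rw [Complex.two_cos, mul_add, ← Complex.exp_add, ← Complex.exp_add, ← add_mul, ← add_mul,
    add_halves, add_neg_cancel, zero_mul, Complex.exp_zero, circleMap_zero, Complex.ofReal_one,
    one_mul, add_comm]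

theorem one_sub_circleMap (θ : ℝ) :
    1 - circleMap 0 1 θ =
      Complex.exp (θ / 2 * Complex.I) * (2 * Complex.sin (θ / 2)) * -Complex.I := by
  rw [Complex.two_sin, ← mul_assoc, mul_sub, ← Complex.exp_add, ← Complex.exp_add, ← add_mul,
    ← add_mul, add_halves, add_neg_cancel, zero_mul, Complex.exp_zero, circleMap_zero,
    Complex.ofReal_one, one_mul, mul_assoc, mul_neg, Complex.I_mul_I, neg_neg, mul_one]

theorem cayleyTransform_circleMap (θ : ℝ) :
    cayleyTransform (circleMap 0 1 θ) = Real.tan (θ / 2) := by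
  rw [cayleyTransform, one_add_circleMap, one_sub_circleMap, Complex.ofReal_tan,
    Complex.tan_eq_sin_div_cos, Complex.ofReal_div, Complex.ofReal_ofNat]
  calc Complex.I * (Complex.exp (θ / 2 * Complex.I) * (2 * Complex.sin (θ / 2)) * -Complex.I) /
        (Complex.exp (θ / 2 * Complex.I) * (2 * Complex.cos (θ / 2)))
      = Complex.exp (θ / 2 * Complex.I) * (2 * Complex.sin (θ / 2)) /
        (Complex.exp (θ / 2 * Complex.I) * (2 * Complex.cos (θ / 2))) := by
        congr 1
        linear_combination
          -(Complex.exp (θ / 2 * Complex.I) * (2 * Complex.sin (θ / 2))) * Complex.I_sq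
    _ = Complex.sin (θ / 2) / Complex.cos (θ / 2) := by
        rw [mul_div_mul_left _ _ (Complex.exp_ne_zero _), mul_div_mul_left _ _ two_ne_zero]

theorem tendsto_cayleyTransform_circleMap {θ : ℝ} (hθ : θ ∈ Set.Ioo (-Real.pi) Real.pi) :
    Tendsto (fun r => cayleyTransform (circleMap 0 r θ)) (𝓝[<] 1)
      (𝓝[{z : ℂ | 0 < z.im}] (Real.tan (θ / 2) : ℂ)) := by
  have hcos : Complex.cos (θ / 2) ≠ 0 := by
    rw [← Complex.ofReal_ofNat, ← Complex.ofReal_div, ← Complex.ofReal_cos]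
    exact Complex.ofReal_ne_zero.2
      (Real.cos_pos_of_mem_Ioo ⟨by linarith [hθ.1], by linarith [hθ.2]⟩).ne'
  have hne : 1 + circleMap 0 1 θ ≠ 0 := by
    rw [one_add_circleMap]
    exact mul_ne_zero (Complex.exp_ne_zero _) (mul_ne_zero two_ne_zero hcos)
  have hradial : Continuous fun r => circleMap 0 r θ := by unfold circleMap; fun_prop
  refine tendsto_nhdsWithin_iff.2 ⟨?_, ?_⟩
  · rw [← cayleyTransform_circleMap]
    exact ((differentiableAt_cayleyTransform hne).continuousAt.tendsto.comp
      (hradial.tendsto 1)).mono_left nhdsWithin_le_nhds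
  · filter_upwards [Ioo_mem_nhdsLT (zero_lt_one' ℝ)] with r hr
    exact im_cayleyTransform_pos (by simpa [abs_of_pos hr.1] using hr.2)

theorem integrable_of_tendsto_re_upperHalfPlane {f : ℂ → ℂ} {b : ℝ → ℝ}
    (hf : DifferentiableOn ℂ f {z | 0 < z.im}) (hpos : ∀ z : ℂ, 0 < z.im → 0 ≤ (f z).re)
    (hb : ∀ᵐ t : ℝ, Tendsto (fun z => (f z).re) (𝓝[{z : ℂ | 0 < z.im}] (t : ℂ)) (𝓝 (b t))) :
    Integrable fun t => (1 + t ^ 2)⁻¹ * b t := by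
  have hmaps : Set.MapsTo cayleyTransform (Metric.ball 0 1) {z | 0 < z.im} := fun z hz =>
    im_cayleyTransform_pos (mem_ball_zero_iff.1 hz)
  have hdiff : DifferentiableOn ℂ cayleyTransform (Metric.ball 0 1) := fun z hz =>
    (differentiableAt_cayleyTransform
      (one_add_ne_zero_of_norm_lt_one (mem_ball_zero_iff.1 hz))).differentiableWithinAt
  have hIoc : (Set.Ioc (-Real.pi) (-Real.pi + 2 * Real.pi) : Set ℝ) =ᵐ[volume]
      Set.Ioo (-Real.pi) Real.pi := by
    rw [show -Real.pi + 2 * Real.pi = Real.pi by ring]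
    exact Ioo_ae_eq_Ioc.symm
  have hangle : IntegrableOn (fun θ => b (Real.tan (θ / 2))) (Set.Ioo (-Real.pi) Real.pi) := by
    rw [← integrableOn_congr_set_ae hIoc]
    refine integrableOn_of_tendsto_re_circleMap one_pos (hf.comp hdiff hmaps)
      (fun z hz => hpos _ (hmaps hz)) ?_
    rw [Measure.restrict_congr_set hIoc]
    filter_upwards [ae_restrict_tan_half_of_ae hb, ae_restrict_mem measurableSet_Ioo] with θ hθ hmem
    exact hθ.comp (tendsto_cayleyTransform_circleMap hmem)
  simpa [Real.tan_arctan] using integrable_comp_two_mul_arctan_iff.2 hangle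

end HalfPlane

namespace JostFamilyRegular

variable {U : ℂ → ℝ → ℂ} {x : ℝ}

theorem continuousOn_normalizedLogDeriv (hU : JostFamilyRegular U)
    (hne : ∀ k : ℂ, 0 ≤ k.im → k ≠ 0 → U k x ≠ 0) :
    ContinuousOn (fun k => normalizedLogDeriv k (U k) x) {k | 0 ≤ k.im ∧ k ≠ 0} := by
  obtain ⟨-, hcont, -, hcont'⟩ := hU x
  have hsub : {k : ℂ | 0 ≤ k.im ∧ k ≠ 0} ⊆ {k | 0 ≤ k.im} := fun _ hk => hk.1
  exact (hcont'.mono hsub).div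
    ((continuousOn_const.mul continuousOn_id).mul (hcont.mono hsub)) fun k hk =>
      mul_ne_zero (mul_ne_zero Complex.I_ne_zero hk.2) (hne k hk.1 hk.2)

theorem differentiableOn_normalizedLogDeriv (hU : JostFamilyRegular U)
    (hne : ∀ k : ℂ, 0 ≤ k.im → k ≠ 0 → U k x ≠ 0) :
    DifferentiableOn ℂ (fun k => normalizedLogDeriv k (U k) x) {k | 0 < k.im} := by
  obtain ⟨hdiff, -, hdiff', -⟩ := hU x
  refine hdiff'.div (((differentiableOn_const _).mul differentiableOn_id).mul hdiff)
    fun k (hk : 0 < k.im) => ?_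
  have hk₀ : k ≠ 0 := fun h => hk.ne' (congrArg Complex.im h)
  exact mul_ne_zero (mul_ne_zero Complex.I_ne_zero hk₀) (hne k hk.le hk₀)

end JostFamilyRegular

theorem re_inv_w_plus_wminus_integrable_general (c : ℝ → ℝ) (hmeas : AEMeasurable c)
    {c₀ : ℝ} (hc₀ : 0 < c₀) (hc : ∀ᵐ x, c₀ ≤ c x) (x : ℝ)
    (U₁ U₂ : ℂ → ℝ → ℂ)
    (hU₁ : ∀ k : ℂ, 0 ≤ k.im → IsJostPlus c k (U₁ k))
    (hU₂ : ∀ k : ℂ, 0 ≤ k.im → IsJostMinus c k (U₂ k))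
    (hreg₁ : JostFamilyRegular U₁) (hreg₂ : JostFamilyRegular U₂) :
    Integrable (fun k : ℝ =>
      (1 / (1 + k ^ 2)) *
        (1 / (deriv (U₁ (k : ℂ)) x / (Complex.I * (k : ℂ) * U₁ (k : ℂ) x) +
              -(deriv (U₂ (k : ℂ)) x) / (Complex.I * (k : ℂ) * U₂ (k : ℂ) x))).re) := by
  set W : ℂ → ℂ := fun k => normalizedLogDeriv k (U₁ k) x - normalizedLogDeriv k (U₂ k) x
  have hne₁ : ∀ k : ℂ, 0 ≤ k.im → k ≠ 0 → U₁ k x ≠ 0 := fun k hk hk₀ =>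
    (hU₁ k hk).ne_zero hc₀ hmeas hc hk hk₀ x
  have hne₂ : ∀ k : ℂ, 0 ≤ k.im → k ≠ 0 → U₂ k x ≠ 0 := fun k hk hk₀ =>
    (hU₂ k hk).ne_zero hc₀ hmeas hc hk hk₀ x
  have hW : ∀ k ∈ {k : ℂ | 0 ≤ k.im ∧ k ≠ 0}, 0 < (W k).re := fun k hk =>
    re_normalizedLogDeriv_sub_pos (hU₁ k hk.1) (hU₂ k hk.1) hc₀ hmeas hc hk.1 hk.2 x
  have hsub : {k : ℂ | 0 < k.im} ⊆ {k | 0 ≤ k.im ∧ k ≠ 0} := fun k (hk : 0 < k.im) =>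
    ⟨hk.le, fun h => hk.ne' (congrArg Complex.im h)⟩
  have hdiff : DifferentiableOn ℂ (fun k => (W k)⁻¹) {k | 0 < k.im} :=
    ((hreg₁.differentiableOn_normalizedLogDeriv hne₁).sub
      (hreg₂.differentiableOn_normalizedLogDeriv hne₂)).inv
        fun k hk => Complex.ne_zero_of_re_pos (hW k (hsub hk))
  have hcont : ContinuousOn (fun k => (W k)⁻¹) {k | 0 ≤ k.im ∧ k ≠ 0} :=
    ((hreg₁.continuousOn_normalizedLogDeriv hne₁).sub
      (hreg₂.continuousOn_normalizedLogDeriv hne₂)).inv₀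
        fun k hk => Complex.ne_zero_of_re_pos (hW k hk)
  have hpos : ∀ k : ℂ, 0 < k.im → 0 ≤ ((W k)⁻¹).re := fun k hk => by
    rw [Complex.inv_re]
    exact div_nonneg (hW k (hsub hk)).le (Complex.normSq_nonneg _)
  have hboundary : ∀ᵐ t : ℝ, Tendsto (fun k => ((W k)⁻¹).re) (𝓝[{k : ℂ | 0 < k.im}] (t : ℂ))
      (𝓝 ((W t)⁻¹).re) := by
    filter_upwards [Measure.ae_ne volume (0 : ℝ)] with t ht
    exact (Complex.continuous_re.tendsto _).comp
      ((hcont t ⟨by simp, Complex.ofReal_ne_zero.2 ht⟩).mono hsub)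
  have hint := integrable_of_tendsto_re_upperHalfPlane hdiff hpos hboundary
  simpa only [W, normalizedLogDeriv, one_div, neg_div, ← sub_eq_add_neg] using hint

/-- For fixed `x`, `k ↦ (1/(1+k²)) Re(1/(w(x,k) + w₋(x,k)))` is integrable on `ℝ`. -/
theorem re_inv_w_plus_wminus_integrable (c : ℝ → ℝ) (hmeas : Measurable c)
    (h1 : HypH1 c) (h2 : HypH2 c) (x : ℝ)
    (U₁ U₂ : ℂ → ℝ → ℂ)
    (hU₁ : ∀ k : ℂ, 0 ≤ k.im → IsJostPlus c k (U₁ k))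
    (hU₂ : ∀ k : ℂ, 0 ≤ k.im → IsJostMinus c k (U₂ k))
    (hreg₁ : JostFamilyRegular U₁) (hreg₂ : JostFamilyRegular U₂) :
    Integrable (fun k : ℝ =>
      (1 / (1 + k ^ 2)) *
        (1 / (deriv (U₁ (k : ℂ)) x / (Complex.I * (k : ℂ) * U₁ (k : ℂ) x) +
              -(deriv (U₂ (k : ℂ)) x) / (Complex.I * (k : ℂ) * U₂ (k : ℂ) x))).re) := by
  obtain ⟨c₀, hc₀, _, _, hc⟩ := h1
  exact re_inv_w_plus_wminus_integrable_general c hmeas.aemeasurable hc₀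
    (hc.mono fun _ h => h.1.le) x U₁ U₂ hU₁ hU₂ hreg₁ hreg₂
end
end

section
/- Let c satisfy [H1] and [H2], let κ ≥ 0, and (for κ > 0) let u₁ be the real-valued Jost solution from +∞ at k = iκ; set m₁(x) = e^{κx} u₁(x). Then for every x ∈ ℝ, ( 2κ m₁(x) − m₁'(x) ) · e^{κ ∫ₓ^∞ Q(s) ds} ≥ 2κ, where Q = 1 − 1/c. (For κ = 0 both sides vanish.) -/
open MeasureTheory Filter Topology

noncomputable section

/-- Real form of the equation at `k = iκ`: `u'' = (κ²/c²) u` a.e., with `u` of class `C¹`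
with locally absolutely continuous derivative. -/
def SolvesHelmholtzR (c : ℝ → ℝ) (κ : ℝ) (u : ℝ → ℝ) : Prop :=
  ContDiff ℝ 1 u ∧
  ∀ a b : ℝ, deriv u b = deriv u a + ∫ x in a..b, (κ ^ 2 / (c x) ^ 2) * u x

/-- The real-valued Jost solution from `+∞` at `k = iκ`: `e^{κx} u(x) → 1` as `x → +∞`. -/
def IsJostPlusR (c : ℝ → ℝ) (κ : ℝ) (u : ℝ → ℝ) : Prop :=
  SolvesHelmholtzR c κ u ∧
  Tendsto (fun x : ℝ => Real.exp (κ * x) * u x) atTop (𝓝 1)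

/-! Write `n = 1/c` for the slowness and `φ(x) = x + ∫ₓ^∞ (1 - n)` for the travel time, so that
`φ' = n`, the weight in the claim is `e^{κ(φ(x) - x)}` and the left-hand side is
`(κ u - u') e^{κφ}`. Once `u > 0 ≥ u'` is known, `(κ u - u')² ≥ -4κ u u'` reduces the claim to
`F := -u u' e^{2κφ} ≥ κ`. Since `F' = -(u' + κ n u)² e^{2κφ}`, `F` is antitone. If `F` fell below
`κ` at some point, it would stay there, and then the derivative
`2 (κ m₁² - F e^{-2κ(φ(x) - x)})` of `m₁²` would be eventually bounded below by a positive constant,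
contradicting `m₁ → 1`. Finally `F ≥ 0` makes `u²` antitone, and as `u` is positive near `+∞` it is
positive everywhere. -/

/-- `f` is an absolutely continuous antiderivative of `g` on the line: the fundamental theorem of
calculus holds between any two points. Local integrability of `g` is included because the integral
of a non-integrable function is `0` by convention. -/
structure IsACPrimitive (f g : ℝ → ℝ) : Prop where
  locallyIntegrable : LocallyIntegrable g
  eq_add_integral : ∀ a b, f b = f a + ∫ x in a..b, g x

namespace IsACPrimitive

variable {f g : ℝ → ℝ}

lemma eq_add_integral_fun (h : IsACPrimitive f g) (a : ℝ) :
    f = fun x ↦ f a + ∫ t in a..x, g t :=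
  funext (h.eq_add_integral a)

lemma absolutelyContinuousOnInterval (h : IsACPrimitive f g) (a b : ℝ) :
    AbsolutelyContinuousOnInterval f a b := by
  have hg : IntervalIntegrable g volume a b :=
    (h.locallyIntegrable.integrableOn_isCompact isCompact_uIcc).intervalIntegrable
  have hconst : AbsolutelyContinuousOnInterval (fun _ ↦ f a) a b :=
    contDiffOn_const.absolutelyContinuousOnInterval
  rw [h.eq_add_integral_fun a]
  exact hconst.fun_add (hg.absolutelyContinuousOnInterval_intervalIntegral Set.left_mem_uIcc)

lemma ae_hasDerivAt (h : IsACPrimitive f g) : ∀ᵐ x, HasDerivAt f (g x) x := by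
  filter_upwards [_root_.LocallyIntegrable.ae_hasDerivAt_integral h.locallyIntegrable] with x hx
  rw [h.eq_add_integral_fun 0]
  exact (hx 0).const_add _

end IsACPrimitive

lemma absolutelyContinuousOnInterval_comp_of_lipschitzOnWith {X Y : Type*} [PseudoMetricSpace X]
    [PseudoMetricSpace Y] {K : NNReal} {g : X → Y} {f : ℝ → X} {a b : ℝ}
    (hg : LipschitzOnWith K g (f '' Set.uIcc a b)) (hf : AbsolutelyContinuousOnInterval f a b) :
    AbsolutelyContinuousOnInterval (g ∘ f) a b := by
  refine squeeze_zero' (.of_forall fun E ↦ Finset.sum_nonneg fun i _ ↦ dist_nonneg) ?_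
    (by simpa only [mul_zero] using Tendsto.const_mul (K : ℝ) hf)
  filter_upwards [mem_inf_of_right (mem_principal_self _)] with E hE
  rw [Finset.mul_sum]
  refine Finset.sum_le_sum fun i hi ↦ ?_
  obtain ⟨hleft, hright⟩ := hE.1 i hi
  exact hg.dist_le_mul _ (Set.mem_image_of_mem f hleft) _ (Set.mem_image_of_mem f hright)

lemma absolutelyContinuousOnInterval_comp_of_contDiff {E F : Type*} [NormedAddCommGroup E]
    [NormedSpace ℝ E] [ProperSpace E] [NormedAddCommGroup F] [NormedSpace ℝ F] {g : E → F}
    {f : ℝ → E} {a b : ℝ} (hg : ContDiff ℝ 1 g) (hf : AbsolutelyContinuousOnInterval f a b) :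
    AbsolutelyContinuousOnInterval (g ∘ f) a b := by
  obtain ⟨R, hR⟩ := hf.exists_bound
  obtain ⟨K, hK⟩ := hg.contDiffOn.exists_lipschitzOnWith one_ne_zero
    (convex_closedBall (0 : E) R) (isCompact_closedBall 0 R)
  refine absolutelyContinuousOnInterval_comp_of_lipschitzOnWith (hK.mono ?_) hf
  rintro _ ⟨x, hx, rfl⟩
  exact mem_closedBall_zero_iff.2 (hR x hx)

lemma antitone_of_ae_hasDerivAt_nonpos {f f' : ℝ → ℝ}
    (hac : ∀ a b, AbsolutelyContinuousOnInterval f a b) (hf : ∀ᵐ x, HasDerivAt f (f' x) x)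
    (hf' : ∀ᵐ x, f' x ≤ 0) : Antitone f := by
  intro a b hab
  have hderiv : ∀ᵐ x, 0 ≤ -deriv f x := by
    filter_upwards [hf, hf'] with x hx hx'
    rwa [hx.deriv, neg_nonneg]
  have hint : 0 ≤ ∫ x in a..b, -deriv f x := intervalIntegral.integral_nonneg_of_ae hab hderiv
  rw [intervalIntegral.integral_neg, (hac a b).integral_deriv_eq_sub] at hint
  linarith

lemma nonpos_of_tendsto_of_le_deriv {f g : ℝ → ℝ} {a b : ℝ} (hd : Differentiable ℝ f)
    (hf : Tendsto f atTop (𝓝 a)) (hg : Tendsto g atTop (𝓝 b))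
    (hle : ∀ᶠ x in atTop, g x ≤ deriv f x) : b ≤ 0 := by
  have hmvt (x : ℝ) : ∃ y > x, deriv f y = f (x + 1) - f x := by
    obtain ⟨y, hy, hslope⟩ := exists_deriv_eq_slope f (lt_add_one x) hd.continuous.continuousOn
      hd.differentiableOn
    exact ⟨y, hy.1, by simpa using hslope⟩
  choose y hxy hy using hmvt
  have hy_top : Tendsto y atTop atTop := tendsto_atTop_mono (fun x ↦ (hxy x).le) tendsto_id
  have hdiff : Tendsto (fun x ↦ f (x + 1) - f x) atTop (𝓝 0) := by
    simpa using (hf.comp (tendsto_atTop_add_const_right _ 1 tendsto_id)).sub hf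
  refine le_of_tendsto_of_tendsto (hg.comp hy_top) hdiff ?_
  filter_upwards [hy_top.eventually hle] with x hx
  exact hx.trans_eq (hy x)

lemma pos_of_mul_deriv_nonpos {u : ℝ → ℝ} (hd : Differentiable ℝ u)
    (hu : ∀ x, u x * deriv u x ≤ 0) (hpos : ∃ᶠ x in atTop, 0 < u x) (x : ℝ) : 0 < u x := by
  have hsq : Antitone (fun x ↦ u x ^ 2) :=
    antitone_of_hasDerivAt_nonpos (f' := fun x ↦ 2 * (u x * deriv u x))
      (fun x ↦ ((hd x).hasDerivAt.fun_pow 2).congr_deriv (by ring))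
      fun x ↦ mul_nonpos_of_nonneg_of_nonpos zero_le_two (hu x)
  have hne (y : ℝ) : u y ≠ 0 := by
    obtain ⟨z, hyz, hz⟩ := frequently_atTop.1 hpos y
    exact pow_ne_zero_iff two_ne_zero |>.1 ((pow_pos hz 2).trans_le (hsq hyz)).ne'
  obtain ⟨z, hz⟩ := hpos.exists
  by_contra! hx
  obtain ⟨y, hy⟩ := mem_range_of_exists_le_of_exists_ge hd.continuous ⟨x, hx⟩ ⟨z, hz.le⟩
  exact hne y hy

/-- The travel time along the line in a medium of slowness `n = 1/c`, i.e. the antiderivative of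
`n`, normalised so that `travelTime n x - x → 0` at `+∞`. -/
def travelTime (n : ℝ → ℝ) (x : ℝ) : ℝ := x + ∫ s in Set.Ioi x, (1 - n s)

lemma tendsto_travelTime_sub_self (n : ℝ → ℝ) :
    Tendsto (fun x ↦ travelTime n x - x) atTop (𝓝 0) := by
  simpa only [travelTime, add_sub_cancel_left, id_eq] using tendsto_integral_Ioi_zero tendsto_id

lemma isACPrimitive_travelTime {n : ℝ → ℝ} (hn : Integrable fun s ↦ 1 - n s) :
    IsACPrimitive (travelTime n) n where
  locallyIntegrable := by
    simpa [Pi.sub_def] using (locallyIntegrable_const (1 : ℝ)).sub hn.locallyIntegrable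
  eq_add_integral a b := by
    have htail := intervalIntegral.integral_Ioi_sub_Ioi' (hn.integrableOn (s := Set.Ioi a))
      (hn.integrableOn (s := Set.Ioi b))
    have hab : ∫ s in a..b, n s = (b - a) - ∫ s in a..b, (1 - n s) := by
      simpa using intervalIntegral.integral_sub intervalIntegrable_const
        (hn.intervalIntegrable (a := a) (b := b)) (f := fun _ ↦ (1 : ℝ))
    rw [travelTime, travelTime, hab]
    linarith

/-- The quantity `-u u' e^{2κφ}`, with `φ` the travel time of the slowness `n`; it is antitone along
solutions of `u'' = κ² n² u`. -/
def weightedFlux (κ : ℝ) (n u : ℝ → ℝ) (x : ℝ) : ℝ :=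
  -(u x * deriv u x) * Real.exp (2 * κ * travelTime n x)

section WeightedFlux

variable {κ : ℝ} {n u : ℝ → ℝ}

lemma weightedFlux_nonneg_iff {x : ℝ} : 0 ≤ weightedFlux κ n u x ↔ u x * deriv u x ≤ 0 := by
  rw [weightedFlux, mul_nonneg_iff_of_pos_right (Real.exp_pos _), neg_nonneg]

lemma antitone_weightedFlux (hn : Integrable fun s ↦ 1 - n s) (hu : ContDiff ℝ 1 u)
    (hu' : IsACPrimitive (deriv u) fun x ↦ κ ^ 2 * n x ^ 2 * u x) :
    Antitone (weightedFlux κ n u) := by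
  have hφ := isACPrimitive_travelTime hn
  have hac (a b : ℝ) : AbsolutelyContinuousOnInterval (weightedFlux κ n u) a b := by
    have hac_mul : AbsolutelyContinuousOnInterval (fun x ↦ u x * deriv u x) a b :=
      hu.contDiffOn.absolutelyContinuousOnInterval.fun_mul (hu'.absolutelyContinuousOnInterval a b)
    have hac_exp :
        AbsolutelyContinuousOnInterval (Real.exp ∘ fun x ↦ 2 * κ * travelTime n x) a b :=
      absolutelyContinuousOnInterval_comp_of_contDiff Real.contDiff_exp
        ((hφ.absolutelyContinuousOnInterval a b).const_mul (2 * κ))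
    exact hac_mul.fun_neg.fun_mul hac_exp
  have hderiv : ∀ᵐ x, HasDerivAt (weightedFlux κ n u)
      (-(deriv u x + κ * n x * u x) ^ 2 * Real.exp (2 * κ * travelTime n x)) x := by
    filter_upwards [hu'.ae_hasDerivAt, hφ.ae_hasDerivAt] with x hdu hdφ
    have hud : HasDerivAt u (deriv u x) x := (hu.differentiable one_ne_zero x).hasDerivAt
    have hexp := (hdφ.const_mul (2 * κ)).exp
    refine ((hud.fun_mul hdu).fun_neg.fun_mul hexp).congr_deriv ?_
    ring
  exact antitone_of_ae_hasDerivAt_nonpos hac hderiv <| .of_forall fun x ↦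
    mul_nonpos_of_nonpos_of_nonneg (neg_nonpos.2 (sq_nonneg _)) (Real.exp_pos _).le

lemma hasDerivAt_exp_mul_mul (κ : ℝ) {x : ℝ} (hu : DifferentiableAt ℝ u x) :
    HasDerivAt (fun y ↦ Real.exp (κ * y) * u y) (Real.exp (κ * x) * (κ * u x + deriv u x)) x := by
  refine (((hasDerivAt_id x).const_mul κ).exp.fun_mul hu.hasDerivAt).congr_deriv ?_
  simp only [id_eq]
  ring

lemma le_weightedFlux {a : ℝ} (hu : Differentiable ℝ u)
    (hlim : Tendsto (fun x ↦ Real.exp (κ * x) * u x) atTop (𝓝 a))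
    (hanti : Antitone (weightedFlux κ n u)) (x : ℝ) : κ * a ^ 2 ≤ weightedFlux κ n u x := by
  set m : ℝ → ℝ := fun y ↦ Real.exp (κ * y) * u y
  let d : ℝ → ℝ := fun y ↦ Real.exp (-(2 * κ * (travelTime n y - y)))
  have hd : Tendsto d atTop (𝓝 1) := by
    simpa [Function.comp_def] using (Real.continuous_exp.tendsto _).comp
      ((tendsto_travelTime_sub_self n).const_mul (2 * κ)).neg
  have hm (y : ℝ) :
      HasDerivAt (fun y ↦ m y ^ 2) (2 * (κ * m y ^ 2 - weightedFlux κ n u y * d y)) y := by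
    have hcancel : Real.exp (2 * κ * travelTime n y) * d y = Real.exp (κ * y) ^ 2 := by
      rw [← Real.exp_add, ← Real.exp_nat_mul]
      congr 1
      push_cast
      ring
    refine ((hasDerivAt_exp_mul_mul κ (hu y)).pow 2).congr_deriv ?_
    simp only [m, weightedFlux]
    linear_combination (-2 * u y * deriv u y) * hcancel
  have hlower : Tendsto (fun y ↦ 2 * (κ * m y ^ 2 - weightedFlux κ n u x * d y)) atTop
      (𝓝 (2 * (κ * a ^ 2 - weightedFlux κ n u x))) := by
    simpa using (((hlim.pow 2).const_mul κ).sub (hd.const_mul (weightedFlux κ n u x))).const_mul 2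
  have hle : 2 * (κ * a ^ 2 - weightedFlux κ n u x) ≤ 0 := by
    refine nonpos_of_tendsto_of_le_deriv (fun y ↦ (hm y).differentiableAt) (hlim.pow 2) hlower ?_
    filter_upwards [eventually_ge_atTop x] with y hxy
    rw [(hm y).deriv]
    have _ : 0 ≤ d y := (Real.exp_pos _).le
    gcongr
    exact hanti hxy
  linarith

lemma two_mul_le_of_le_weightedFlux {x : ℝ} (hκ : 0 ≤ κ) (hpos : 0 < u x)
    (hflux : κ ≤ weightedFlux κ n u x) :
    2 * κ ≤ (κ * u x - deriv u x) * Real.exp (κ * travelTime n x) := by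
  have hderiv : deriv u x ≤ 0 :=
    nonpos_of_mul_nonpos_right (weightedFlux_nonneg_iff.1 (hκ.trans hflux)) hpos
  have hnonneg : 0 ≤ κ * u x - deriv u x := sub_nonneg.2 (hderiv.trans (by positivity))
  refine (sq_le_sq₀ (by positivity) (mul_nonneg hnonneg (Real.exp_pos _).le)).1 ?_
  calc (2 * κ) ^ 2 = 4 * κ * κ := by ring
    _ ≤ 4 * κ * weightedFlux κ n u x := by gcongr
    _ = 4 * κ * -(u x * deriv u x) * Real.exp (κ * travelTime n x) ^ 2 := by
      rw [weightedFlux, ← Real.exp_nat_mul]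
      push_cast
      ring_nf
    _ ≤ (κ * u x - deriv u x) ^ 2 * Real.exp (κ * travelTime n x) ^ 2 := by
      gcongr
      linarith [sq_nonneg (κ * u x + deriv u x)]
    _ = _ := (mul_pow _ _ 2).symm

theorem m1_lower_bound_general (hκ : 0 ≤ κ) (hn : Integrable fun s ↦ 1 - n s)
    (hu : ContDiff ℝ 1 u) (hu' : IsACPrimitive (deriv u) fun x ↦ κ ^ 2 * n x ^ 2 * u x)
    (hlim : Tendsto (fun x ↦ Real.exp (κ * x) * u x) atTop (𝓝 1)) (x : ℝ) :
    2 * κ ≤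
      (2 * κ * (Real.exp (κ * x) * u x) - deriv (fun y ↦ Real.exp (κ * y) * u y) x) *
        Real.exp (κ * ∫ s in Set.Ioi x, (1 - n s)) := by
  have hd : Differentiable ℝ u := hu.differentiable one_ne_zero
  have hflux (y : ℝ) : κ ≤ weightedFlux κ n u y := by
    simpa using le_weightedFlux hd hlim (antitone_weightedFlux hn hu hu') y
  have hsign (y : ℝ) : u y * deriv u y ≤ 0 := weightedFlux_nonneg_iff.1 (hκ.trans (hflux y))
  have hev : ∀ᶠ y in atTop, 0 < u y :=
    (hlim.eventually_const_lt one_pos).mono fun y hy ↦ pos_of_mul_pos_right hy (Real.exp_pos _).le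
  have hpos : 0 < u x := pos_of_mul_deriv_nonpos hd hsign hev.frequently x
  calc 2 * κ ≤ (κ * u x - deriv u x) * Real.exp (κ * travelTime n x) :=
        two_mul_le_of_le_weightedFlux hκ hpos (hflux x)
    _ = _ := by
        rw [(hasDerivAt_exp_mul_mul κ (hd x)).deriv, travelTime, mul_add, Real.exp_add]
        ring

end WeightedFlux

section Coefficient

variable {c u : ℝ → ℝ} {κ : ℝ}

lemma integrable_Qfun (hc : Measurable c) (h1 : HypH1 c) (h2 : HypH2 c) : Integrable (Qfun c) := by
  obtain ⟨c₀, hc₀, _, _, hbd⟩ := h1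
  obtain ⟨C, _, δ, hδ, hdecay⟩ := h2
  have hbracket : Integrable fun x : ℝ ↦ (1 + ‖x‖ ^ 2) ^ (-(1 + δ) / 2) :=
    integrable_rpow_neg_one_add_norm_sq (by simpa using hδ)
  refine (hbracket.const_mul (C / c₀)).mono' ?_ ?_
  · exact (measurable_const.sub (measurable_const.div hc)).aestronglyMeasurable
  · filter_upwards [hbd, hdecay] with x ⟨hlow, _⟩ hx
    have hcx : 0 < c x := hc₀.trans hlow
    calc ‖Qfun c x‖ = |c x - 1| / c x := by
          rw [Qfun, one_sub_div hcx.ne', Real.norm_eq_abs, abs_div, abs_of_pos hcx]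
      _ ≤ C * (1 + x ^ 2) ^ (-(1 + δ) / 2) / c₀ := by gcongr
      _ = C / c₀ * (1 + ‖x‖ ^ 2) ^ (-(1 + δ) / 2) := by
          rw [Real.norm_eq_abs, sq_abs, div_mul_eq_mul_div]

lemma HypH1.locallyIntegrable_mul (h1 : HypH1 c) (hc : Measurable c) {v : ℝ → ℝ}
    (hv : Continuous v) : LocallyIntegrable fun x ↦ (1 / c x) ^ 2 * v x := by
  obtain ⟨c₀, hc₀, _, _, hbd⟩ := h1
  have hdom : Continuous fun x ↦ (1 / c₀) ^ 2 * v x := continuous_const.mul hv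
  refine hdom.locallyIntegrable.mono ?_ ?_
  · exact (((measurable_const.div hc).pow_const 2).mul hv.measurable).aestronglyMeasurable
  · filter_upwards [hbd] with x ⟨hlow, _⟩
    have hcx : 0 < c x := hc₀.trans hlow
    rw [norm_mul, norm_mul, norm_pow, norm_pow, Real.norm_of_nonneg (one_div_pos.2 hcx).le,
      Real.norm_of_nonneg (one_div_pos.2 hc₀).le]
    gcongr

lemma SolvesHelmholtzR.isACPrimitive_deriv (hu : SolvesHelmholtzR c κ u) (hc : Measurable c)
    (h1 : HypH1 c) : IsACPrimitive (deriv u) fun x ↦ κ ^ 2 * (1 / c x) ^ 2 * u x where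
  locallyIntegrable := by
    simpa only [mul_left_comm, mul_assoc] using
      h1.locallyIntegrable_mul hc (hu.1.continuous.const_mul (κ ^ 2))
  eq_add_integral a b := by simpa only [one_div_pow, mul_one_div] using hu.2 a b

end Coefficient

/-- The key pointwise lower bound `(2κ m₁ - m₁') e^{κ∫ₓ^∞ Q} ≥ 2κ`, where
`m₁(x) = e^{κx} u₁(x)`. -/
theorem m1_lower_bound (c : ℝ → ℝ) (hmeas : Measurable c)
    (h1 : HypH1 c) (h2 : HypH2 c)
    (κ : ℝ) (hκ : 0 ≤ κ) (u₁ : ℝ → ℝ) (hu : IsJostPlusR c κ u₁) :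
    ∀ x : ℝ,
      2 * κ ≤
        (2 * κ * (Real.exp (κ * x) * u₁ x) -
            deriv (fun y : ℝ => Real.exp (κ * y) * u₁ y) x) *
          Real.exp (κ * ∫ s in Set.Ioi x, Qfun c s) := by
  exact m1_lower_bound_general hκ (integrable_Qfun hmeas h1 h2) hu.1.1
    (hu.1.isACPrimitive_deriv hmeas h1) hu.2
end
end

section
/- Let c satisfy [H1] and [H2], let k ∈ ℝ, k ≠ 0, let u₁, u₂ be the Jost solutions at k, and let T(k) ≠ 0, R₂(k) satisfy u₁(·,k) = (R₂(k)/T(k)) u₂(·,k) + (1/T(k)) conj(u₂(·,k)). With w(x,k) = u₁'(x,k)/(i k u₁(x,k)) and r(x,k) = (1 − w(x,k))/(1 + w(x,k)), one has 1 − |R₂(k)|² = exp( − ∫_ℝ (i k q(y)/2) ( r(y,k) − conj(r(y,k)) ) dy ), where the exponent is a real number, equal to ∫_ℝ k q(y) Im r(y,k) dy. -/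
open MeasureTheory Filter Topology

noncomputable section

/-- `w(x,k) = u₁'(x)/(ik u₁(x))` for `k ≠ 0`, and `w(x,0) = 1`. -/
def wJost (k : ℂ) (u : ℝ → ℂ) (x : ℝ) : ℂ :=
  if k = 0 then 1 else deriv u x / (Complex.I * k * u x)

/-- `r(x,k) = (1 - w(x,k))/(1 + w(x,k))`. -/
def rJost (k : ℂ) (u : ℝ → ℂ) (x : ℝ) : ℂ :=
  (1 - wJost k u x) / (1 + wJost k u x)

/-!
Variation of constants: write `u₁ = α exp (i k x) + β exp (-i k x)` and
`u₁' = i k (α exp (i k x) - β exp (-i k x))`. Then `α' = -(i k / 2) q exp (-i k x) u₁`, and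
`r = exp (-2 i k x) β / α`, so that `exp (-i k x) u₁ = (1 + r) α` and `α` solves the scalar linear
equation `α' = -(i k / 2) q (1 + r) α`. It tends to `1` at `+∞` and to `1 / T` at `-∞`, whence
`T = exp (-∫ (i k / 2) q (1 + r))` and `‖T‖² = exp (∫ k q Im r)`. The flux `‖α‖² - ‖β‖²` is
constant, equal to `1` at `+∞` and to `(1 - ‖R₂‖²) / ‖T‖²` at `-∞`; hence `1 - ‖R₂‖² = ‖T‖²`.
-/

section AbsoluteContinuity

variable {E X Y : Type*} [NormedAddCommGroup E] [PseudoMetricSpace X] [PseudoMetricSpace Y]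

lemma absolutelyContinuousOnInterval_of_dist_le {f : ℝ → X} {g : ℝ → Y} {a b K : ℝ}
    (hg : AbsolutelyContinuousOnInterval g a b)
    (hfg : ∀ x ∈ Set.uIcc a b, ∀ y ∈ Set.uIcc a b, dist (f x) (f y) ≤ K * dist (g x) (g y)) :
    AbsolutelyContinuousOnInterval f a b := by
  refine squeeze_zero' (Eventually.of_forall fun _ => Finset.sum_nonneg fun _ _ => dist_nonneg)
    ?_ (by simpa using Tendsto.const_mul K hg)
  rw [eventually_inf_principal]
  filter_upwards with I hI
  rw [Finset.mul_sum]
  exact Finset.sum_le_sum fun i hi => hfg _ (hI.1 i hi).1 _ (hI.1 i hi).2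

lemma intervalIntegrable_of_locallyIntegrable {f : ℝ → E} (hf : LocallyIntegrable f) (a b : ℝ) :
    IntervalIntegrable f volume a b :=
  intervalIntegrable_iff.2
    ((hf.integrableOn_isCompact isCompact_uIcc).mono_set Set.uIoc_subset_uIcc)

lemma absolutelyContinuousOnInterval_intervalIntegral [NormedSpace ℝ E] {f : ℝ → E} {a b : ℝ}
    (hf : IntervalIntegrable f volume a b) :
    AbsolutelyContinuousOnInterval (fun x => ∫ t in a..x, f t) a b := by
  have hfx (x : ℝ) (hx : x ∈ Set.uIcc a b) : IntervalIntegrable f volume a x :=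
    hf.mono_set (Set.uIcc_subset_uIcc_left hx)
  refine absolutelyContinuousOnInterval_of_dist_le (K := 1)
    (hf.norm.absolutelyContinuousOnInterval_intervalIntegral Set.left_mem_uIcc) fun x hx y hy => ?_
  rw [dist_eq_norm, dist_eq_norm,
    intervalIntegral.integral_interval_sub_left (hfx x hx) (hfx y hy),
    intervalIntegral.integral_interval_sub_left (hfx x hx).norm (hfx y hy).norm, one_mul]
  exact intervalIntegral.norm_integral_le_abs_integral_norm

end AbsoluteContinuity

/-- `F` is locally absolutely continuous on `ℝ` with almost-everywhere derivative `f`. -/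
structure HasACDeriv {E : Type*} [NormedAddCommGroup E] [NormedSpace ℝ E] (F f : ℝ → E) :
    Prop where
  absolutelyContinuousOnInterval : ∀ a b, AbsolutelyContinuousOnInterval F a b
  ae_hasDerivAt : ∀ᵐ x, HasDerivAt F (f x) x

namespace HasACDeriv

section NormedSpace

variable {E : Type*} [NormedAddCommGroup E] [NormedSpace ℝ E] {F G f g : ℝ → E}

lemma of_contDiff (hF : ContDiff ℝ 1 F) : HasACDeriv F (deriv F) where
  absolutelyContinuousOnInterval _ _ := hF.contDiffOn.absolutelyContinuousOnInterval
  ae_hasDerivAt := .of_forall fun _ => (hF.differentiable one_ne_zero).differentiableAt.hasDerivAt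

lemma add (hF : HasACDeriv F f) (hG : HasACDeriv G g) :
    HasACDeriv (fun x => F x + G x) (fun x => f x + g x) where
  absolutelyContinuousOnInterval a b :=
    (hF.absolutelyContinuousOnInterval a b).add (hG.absolutelyContinuousOnInterval a b)
  ae_hasDerivAt := by
    filter_upwards [hF.ae_hasDerivAt, hG.ae_hasDerivAt] with x hFx hGx using hFx.add hGx

lemma congr_deriv (hF : HasACDeriv F f) (hfg : ∀ x, f x = g x) : HasACDeriv F g :=
  funext hfg ▸ hF

lemma eq_of_deriv_eq_zero (hF : HasACDeriv F fun _ => 0) (a b : ℝ) : F a = F b := by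
  obtain ⟨C, hC⟩ := (hF.absolutelyContinuousOnInterval a b).const_of_ae_hasDerivAt_zero
    (hF.ae_hasDerivAt.mono fun _ hx _ => hx)
  rw [hC a Set.left_mem_uIcc, hC b Set.right_mem_uIcc]

variable [CompleteSpace E]

lemma of_integral_eq_sub (hf : LocallyIntegrable f)
    (hF : ∀ a b, ∫ x in a..b, f x = F b - F a) : HasACDeriv F f where
  absolutelyContinuousOnInterval a b := by
    refine absolutelyContinuousOnInterval_of_dist_le (K := 1)
      (absolutelyContinuousOnInterval_intervalIntegral
        (intervalIntegrable_of_locallyIntegrable hf a b))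
      fun x _ y _ => ?_
    simp only [hF, one_mul, dist_sub_right, le_refl]
  ae_hasDerivAt := by
    filter_upwards [_root_.LocallyIntegrable.ae_hasDerivAt_integral hf] with x hx
    simpa only [hF, sub_add_cancel] using (hx 0).add_const (F 0)

lemma integral_eq_sub (hF : HasACDeriv F f) {a b : ℝ} (hf : IntervalIntegrable f volume a b) :
    ∫ x in a..b, f x = F b - F a := by
  obtain ⟨C, hC⟩ := ((hF.absolutelyContinuousOnInterval a b).sub
      (absolutelyContinuousOnInterval_intervalIntegral hf)).const_of_ae_hasDerivAt_zero (by
    filter_upwards [hF.ae_hasDerivAt, hf.ae_hasDerivAt_integral] with x hFx hfx hx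
    simpa only [sub_self] using hFx.sub (hfx hx a Set.left_mem_uIcc))
  have hCa : F a = C := by simpa using hC a Set.left_mem_uIcc
  have hCb : F b - ∫ x in a..b, f x = C := hC b Set.right_mem_uIcc
  rw [hCa, ← hCb, sub_sub_cancel]

lemma exists_tendsto_atTop (hF : HasACDeriv F f) {a : ℝ} (hf : IntegrableOn f (Set.Ioi a)) :
    ∃ L, Tendsto F atTop (𝓝 L) := by
  refine ⟨F a + ∫ x in Set.Ioi a, f x,
    ((intervalIntegral_tendsto_integral_Ioi a hf tendsto_id).const_add (F a)).congr' ?_⟩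
  filter_upwards [eventually_ge_atTop a] with x hx
  have hfx : IntervalIntegrable f volume a x :=
    (intervalIntegrable_iff_integrableOn_Ioc_of_le hx).2 (hf.mono_set Set.Ioc_subset_Ioi_self)
  rw [id, hF.integral_eq_sub hfx, add_sub_cancel]

end NormedSpace

section Mul

variable {A : Type*} [NormedDivisionRing A] [NormedAlgebra ℝ A] {F G f g : ℝ → A}

lemma mul (hF : HasACDeriv F f) (hG : HasACDeriv G g) :
    HasACDeriv (fun x => F x * G x) (fun x => f x * G x + F x * g x) where
  absolutelyContinuousOnInterval a b :=
    (hF.absolutelyContinuousOnInterval a b).smul (hG.absolutelyContinuousOnInterval a b)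
  ae_hasDerivAt := by
    filter_upwards [hF.ae_hasDerivAt, hG.ae_hasDerivAt] with x hFx hGx using hFx.mul hGx

lemma const_mul (hF : HasACDeriv F f) (z : A) :
    HasACDeriv (fun x => z * F x) (fun x => z * f x) where
  absolutelyContinuousOnInterval a b := (hF.absolutelyContinuousOnInterval a b).const_smul z
  ae_hasDerivAt := hF.ae_hasDerivAt.mono fun _ hx => hx.const_mul z

end Mul

section Complex

variable {F f g : ℝ → ℂ}

lemma conj (hF : HasACDeriv F f) :
    HasACDeriv (fun x => starRingEnd ℂ (F x)) (fun x => starRingEnd ℂ (f x)) where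
  absolutelyContinuousOnInterval a b :=
    absolutelyContinuousOnInterval_of_dist_le (K := 1) (hF.absolutelyContinuousOnInterval a b)
      fun _ _ _ _ => by rw [Complex.dist_conj_conj, one_mul]
  ae_hasDerivAt := hF.ae_hasDerivAt.mono fun _ hx => hx.star

lemma cexp (hF : HasACDeriv F f) :
    HasACDeriv (fun x => Complex.exp (F x)) (fun x => Complex.exp (F x) * f x) where
  absolutelyContinuousOnInterval a b := by
    have hFac := hF.absolutelyContinuousOnInterval a b
    obtain ⟨K, hK⟩ := LocallyLipschitzOn.exists_lipschitzOnWith_of_compact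
      (isCompact_uIcc.image_of_continuousOn hFac.continuousOn)
      (Complex.contDiff_exp (𝕜 := ℝ)).locallyLipschitz.locallyLipschitzOn
    exact absolutelyContinuousOnInterval_of_dist_le hFac fun x hx y hy =>
      hK.dist_le_mul _ (Set.mem_image_of_mem F hx) _ (Set.mem_image_of_mem F hy)
  ae_hasDerivAt := hF.ae_hasDerivAt.mono fun _ hx => hx.cexp

lemma eq_cexp_integral_mul (hF : HasACDeriv F fun x => g x * F x) (hg : LocallyIntegrable g)
    (a b : ℝ) : F b = Complex.exp (∫ x in a..b, g x) * F a := by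
  have hprim : HasACDeriv (fun x => ∫ t in a..x, g t) g := .of_integral_eq_sub hg fun c d =>
    (intervalIntegral.integral_interval_sub_left (intervalIntegrable_of_locallyIntegrable hg a d)
      (intervalIntegrable_of_locallyIntegrable hg a c)).symm
  have hconst := ((hprim.const_mul (-1)).cexp.mul hF).congr_deriv (g := fun _ => 0)
    (fun x => by ring) |>.eq_of_deriv_eq_zero b a
  simp only [neg_one_mul, intervalIntegral.integral_same, neg_zero, Complex.exp_zero,
    one_mul] at hconst
  rw [← hconst, ← mul_assoc, ← Complex.exp_add, add_neg_cancel, Complex.exp_zero, one_mul]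

lemma eq_cexp_integral_mul_of_tendsto (hF : HasACDeriv F fun x => g x * F x) (hg : Integrable g)
    {A B : ℂ} (hA : Tendsto F atBot (𝓝 A)) (hB : Tendsto F atTop (𝓝 B)) :
    B = Complex.exp (∫ x, g x) * A := by
  have hint : Tendsto (fun x : ℝ => ∫ t in -x..x, g t) atTop (𝓝 (∫ t, g t)) :=
    intervalIntegral_tendsto_integral hg tendsto_neg_atTop_atBot tendsto_id
  have hmul := hint.cexp.mul (hA.comp tendsto_neg_atTop_atBot)
  refine tendsto_nhds_unique hB (hmul.congr fun x => ?_)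
  exact (hF.eq_cexp_integral_mul hg.locallyIntegrable (-x) x).symm

end Complex

end HasACDeriv

section Helmholtz

open Complex ComplexConjugate

lemma norm_cexp_I_mul_ofReal_mul (θ x : ℝ) : ‖exp (I * θ * x)‖ = 1 := by
  rw [mul_assoc, ← ofReal_mul, norm_exp_I_mul_ofReal]

lemma eq_zero_of_tendsto_of_tendsto_cexp_mul {θ : ℝ} (hθ : θ ≠ 0) {f : ℝ → ℂ} {b L : ℂ}
    (hf : Tendsto f atTop (𝓝 b))
    (hL : Tendsto (fun x : ℝ => exp (I * θ * x) * f x) atTop (𝓝 L)) : b = 0 ∧ L = 0 := by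
  -- Shifting `x` by half a period negates the phase but preserves both limits.
  have hphase (x : ℝ) : exp (I * θ * (x + Real.pi / θ : ℝ)) = -exp (I * θ * x) := by
    have hθ' : (θ : ℂ) ≠ 0 := ofReal_ne_zero.2 hθ
    have : I * θ * (x + Real.pi / θ : ℝ) = I * θ * x + Real.pi * I := by
      push_cast
      field_simp
    rw [this, exp_add, exp_pi_mul_I, mul_neg_one]
  have hshift : Tendsto (fun x : ℝ => x + Real.pi / θ) atTop atTop :=
    tendsto_atTop_add_const_right _ _ tendsto_id
  have hzero : Tendsto (fun x => f x - f (x + Real.pi / θ)) atTop (𝓝 0) := by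
    simpa only [sub_self, Function.comp_def] using hf.sub (hf.comp hshift)
  have hsum : Tendsto (fun x : ℝ => exp (I * θ * x) * (f x - f (x + Real.pi / θ))) atTop
      (𝓝 (L + L)) := by
    refine (hL.add (hL.comp hshift)).congr fun x => ?_
    rw [Function.comp_apply, hphase]
    ring
  have hnorm_mul (g : ℝ → ℂ) (x : ℝ) : ‖exp (I * θ * x) * g x‖ = ‖g x‖ := by
    rw [norm_mul, norm_cexp_I_mul_ofReal_mul, one_mul]
  have hLL : ‖L + L‖ = ‖(0 : ℂ)‖ :=
    tendsto_nhds_unique (hsum.norm.congr (hnorm_mul _)) hzero.norm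
  have hL0 : L = 0 := add_self_eq_zero.1 (norm_eq_zero.1 (hLL.trans norm_zero))
  have hbL : ‖b‖ = ‖L‖ := tendsto_nhds_unique hf.norm (hL.norm.congr (hnorm_mul _))
  exact ⟨norm_eq_zero.1 (by rw [hbL, hL0, norm_zero]), hL0⟩

/-- `u` is a `C¹` solution of `u'' + k² (1 - q) u = 0` in integrated form, that is, with locally
absolutely continuous derivative and the equation holding almost everywhere. -/
structure IsHelmholtzSolution (q : ℝ → ℝ) (k : ℝ) (u : ℝ → ℂ) : Prop where
  contDiff : ContDiff ℝ 1 u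
  integral_eq_sub : ∀ a b, ∫ x in a..b, -((k : ℂ) ^ 2 * (1 - q x) * u x) = deriv u b - deriv u a

/-- The amplitude `α` of `exp (i k x)` in the decomposition `u = α exp (i k x) + β exp (-i k x)`,
`u' = i k (α exp (i k x) - β exp (-i k x))`; the amplitude `β` is `planeWaveAmplitude (-k) u`.
Meaningful for `k ≠ 0` only. -/
def planeWaveAmplitude (k : ℝ) (u : ℝ → ℂ) (x : ℝ) : ℂ :=
  exp (-(I * k * x)) * (u x + deriv u x / (I * k)) / 2

variable {q : ℝ → ℝ} {k : ℝ} {u : ℝ → ℂ}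

lemma norm_cexp_neg_I_mul (k x : ℝ) : ‖exp (-(I * k * x))‖ = 1 := by
  simpa only [ofReal_neg, mul_neg, neg_mul] using norm_cexp_I_mul_ofReal_mul (-k) x

lemma norm_cexp_neg_two_I_mul (k x : ℝ) : ‖exp (-(2 * I * k * x))‖ = 1 := by
  simpa [mul_assoc, mul_left_comm] using norm_cexp_neg_I_mul (2 * k) x

lemma cexp_neg_two_I_mul_mul_cexp_I_mul (k x : ℝ) :
    exp (-(2 * I * k * x)) * exp (I * k * x) = exp (-(I * k * x)) := by
  rw [← exp_add]
  ring_nf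

lemma planeWaveAmplitude_add (k : ℝ) (u : ℝ → ℂ) (x : ℝ) :
    planeWaveAmplitude k u x + exp (-(2 * I * k * x)) * planeWaveAmplitude (-k) u x =
      exp (-(I * k * x)) * u x := by
  simp only [planeWaveAmplitude, ofReal_neg, mul_neg, neg_mul, neg_neg, div_neg]
  linear_combination (u x - deriv u x / (I * k)) / 2 *
    cexp_neg_two_I_mul_mul_cexp_I_mul k x

lemma continuous_planeWaveAmplitude (hu : ContDiff ℝ 1 u) (k : ℝ) :
    Continuous (planeWaveAmplitude k u) := by
  have := hu.continuous
  have := hu.continuous_deriv le_rfl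
  unfold planeWaveAmplitude
  fun_prop

lemma planeWaveAmplitude_conj (k : ℝ) (u : ℝ → ℂ) (x : ℝ) :
    planeWaveAmplitude k (fun y => conj (u y)) x = conj (planeWaveAmplitude (-k) u x) := by
  have hderiv : deriv (fun y => conj (u y)) x = conj (deriv u x) := deriv.star
  simp [planeWaveAmplitude, hderiv, ← exp_conj, Complex.conj_ofNat]

lemma planeWaveAmplitude_comp_neg (k : ℝ) (u : ℝ → ℂ) (x : ℝ) :
    planeWaveAmplitude k (fun y => u (-y)) x = planeWaveAmplitude (-k) u (-x) := by
  simp [planeWaveAmplitude, deriv_comp_neg, neg_div, div_neg]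

lemma planeWaveAmplitude_linearCombination {v w : ℝ → ℂ} (hv : Differentiable ℝ v)
    (hw : Differentiable ℝ w) (a b : ℂ) (k x : ℝ) :
    planeWaveAmplitude k (fun y => a * v y + b * w y) x =
      a * planeWaveAmplitude k v x + b * planeWaveAmplitude k w x := by
  have hderiv : deriv (fun y => a * v y + b * w y) x = a * deriv v x + b * deriv w x :=
    (((hv x).hasDerivAt.const_mul a).add ((hw x).hasDerivAt.const_mul b)).deriv
  simp only [planeWaveAmplitude, hderiv]
  ring

lemma norm_planeWaveAmplitude_sq_sub (k : ℝ) (u : ℝ → ℂ) (x : ℝ) :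
    ‖planeWaveAmplitude k u x‖ ^ 2 - ‖planeWaveAmplitude (-k) u x‖ ^ 2 =
      (conj (u x) * deriv u x).im / k := by
  have hnorm (κ : ℝ) : ‖planeWaveAmplitude κ u x‖ ^ 2 = normSq (u x + deriv u x / (I * κ)) / 4 := by
    rw [planeWaveAmplitude, norm_div, norm_mul, norm_cexp_neg_I_mul, one_mul, div_pow,
      Complex.sq_norm]
    norm_num
  have hre : (u x * conj (deriv u x / (I * k))).re = (conj (u x) * deriv u x).im / k := by
    have : deriv u x / (I * k) = (-I * deriv u x) / k := by
      rw [← div_div, div_I]; ring_nf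
    rw [this, map_div₀, conj_ofReal, ← mul_div_assoc, div_ofReal_re]
    simp only [neg_mul, map_neg, map_mul, conj_I, neg_neg, mul_re, I_re, conj_re, zero_mul, I_im,
      conj_im, mul_neg, one_mul, sub_neg_eq_add, zero_add, mul_im, neg_zero]
    ring
  rw [hnorm, hnorm, ofReal_neg, mul_neg, div_neg, ← sub_eq_add_neg, normSq_add, normSq_sub, hre]
  ring

namespace IsHelmholtzSolution

lemma neg_wavenumber (h : IsHelmholtzSolution q k u) : IsHelmholtzSolution q (-k) u where
  contDiff := h.contDiff
  integral_eq_sub := by simpa only [ofReal_neg, neg_sq] using h.integral_eq_sub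

lemma comp_neg (h : IsHelmholtzSolution q k u) :
    IsHelmholtzSolution (fun x => q (-x)) k (fun x => u (-x)) where
  contDiff := h.contDiff.comp contDiff_neg
  integral_eq_sub a b := by
    rw [intervalIntegral.integral_comp_neg fun x => -((k : ℂ) ^ 2 * (1 - q x) * u x),
      h.integral_eq_sub, deriv_comp_neg, deriv_comp_neg]
    ring

lemma hasACDeriv_deriv (h : IsHelmholtzSolution q k u) (hq : LocallyIntegrable q) :
    HasACDeriv (deriv u) (fun x => -((k : ℂ) ^ 2 * (1 - q x) * u x)) := by
  refine .of_integral_eq_sub ?_ h.integral_eq_sub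
  have hu : Continuous fun x => -((k : ℂ) ^ 2 * u x) := by
    have := h.contDiff.continuous
    fun_prop
  have hqC : LocallyIntegrable fun x => (1 - q x : ℂ) :=
    (locallyIntegrable_const 1).sub fun x => (hq x).imp fun _ hs => ⟨hs.1, hs.2.ofReal⟩
  refine (hqC.mul_continuous hu).congr (.of_forall fun x => ?_)
  ring

lemma hasACDeriv_planeWaveAmplitude (h : IsHelmholtzSolution q k u) (hq : LocallyIntegrable q)
    (hk : k ≠ 0) :
    HasACDeriv (planeWaveAmplitude k u)
      (fun x => -(I * k / 2 * q x) * (exp (-(I * k * x)) * u x)) := by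
  have hphase : HasACDeriv (fun x : ℝ => exp (-(I * k) * x))
      (fun x => exp (-(I * k) * x) * (-(I * k) * deriv ofRealCLM x)) :=
    ((HasACDeriv.of_contDiff ofRealCLM.contDiff).const_mul (-(I * k))).cexp
  have hsum := (HasACDeriv.of_contDiff h.contDiff).add
    ((h.hasACDeriv_deriv hq).const_mul (1 / (I * k)))
  have hfactor : planeWaveAmplitude k u =
      fun x : ℝ => exp (-(I * k) * x) * (1 / 2 * (u x + 1 / (I * k) * deriv u x)) := by
    ext x
    simp only [planeWaveAmplitude]
    ring_nf
  have hk' : (k : ℂ) ≠ 0 := ofReal_ne_zero.2 hk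
  rw [hfactor]
  refine (hphase.mul (hsum.const_mul (1 / 2))).congr_deriv fun x => ?_
  rw [ofRealCLM.hasDerivAt.deriv, ofRealCLM_apply, ofReal_one, ← neg_mul]
  field_simp
  linear_combination (k * u x * (q x - 1) : ℂ) * I_sq

lemma norm_planeWaveAmplitude_sq_sub_eq (h : IsHelmholtzSolution q k u)
    (hq : LocallyIntegrable q) (x y : ℝ) :
    ‖planeWaveAmplitude k u x‖ ^ 2 - ‖planeWaveAmplitude (-k) u x‖ ^ 2 =
      ‖planeWaveAmplitude k u y‖ ^ 2 - ‖planeWaveAmplitude (-k) u y‖ ^ 2 := by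
  -- `conj u * u'` has the real derivative `|u'|² - k² (1 - q) |u|²`.
  have hflux := (HasACDeriv.of_contDiff h.contDiff).conj.mul (h.hasACDeriv_deriv hq)
  have hconst := ((hflux.add (hflux.conj.const_mul (-1))).congr_deriv (g := fun _ => 0) fun t => by
    simp only [map_add, map_mul, map_neg, map_sub, map_pow, map_one, conj_conj, conj_ofReal]
    ring).eq_of_deriv_eq_zero x y
  simp only [neg_one_mul, ← sub_eq_add_neg, sub_conj] at hconst
  rw [mul_left_inj' I_ne_zero, ofReal_inj] at hconst
  rw [norm_planeWaveAmplitude_sq_sub, norm_planeWaveAmplitude_sq_sub,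
    mul_left_cancel₀ two_ne_zero hconst]

lemma norm_planeWaveAmplitude_sq_sub_eq_of_tendsto (h : IsHelmholtzSolution q k u)
    (hq : LocallyIntegrable q) {l : Filter ℝ} [l.NeBot] {A B : ℂ}
    (hA : Tendsto (planeWaveAmplitude k u) l (𝓝 A))
    (hB : Tendsto (planeWaveAmplitude (-k) u) l (𝓝 B)) (x : ℝ) :
    ‖planeWaveAmplitude k u x‖ ^ 2 - ‖planeWaveAmplitude (-k) u x‖ ^ 2 = ‖A‖ ^ 2 - ‖B‖ ^ 2 :=
  tendsto_nhds_unique (tendsto_const_nhds.congr (h.norm_planeWaveAmplitude_sq_sub_eq hq x))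
    ((hA.norm.pow 2).sub (hB.norm.pow 2))

lemma exists_tendsto_planeWaveAmplitude (h : IsHelmholtzSolution q k u) (hq : Integrable q)
    (hk : k ≠ 0) (hu : IsBoundedUnder (· ≤ ·) atTop fun x => ‖u x‖) :
    ∃ A, Tendsto (planeWaveAmplitude k u) atTop (𝓝 A) := by
  obtain ⟨M, hM⟩ := hu
  obtain ⟨a, ha⟩ := eventually_atTop.1 (eventually_map.1 hM)
  have hcont : Continuous fun x : ℝ => exp (-(I * k * x)) * u x := by
    have := h.contDiff.continuous
    fun_prop
  refine (h.hasACDeriv_planeWaveAmplitude hq.locallyIntegrable hk).exists_tendsto_atTop (a := a) ?_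
  refine Integrable.mul_bdd (c := M) (hq.ofReal.const_mul (I * k / 2)).neg.integrableOn
    hcont.aestronglyMeasurable ?_
  filter_upwards [ae_restrict_mem measurableSet_Ioi] with x hx
  rw [norm_mul, norm_cexp_neg_I_mul, one_mul]
  exact ha x (Set.mem_Ioi.1 hx).le

lemma tendsto_planeWaveAmplitude_atTop (h : IsHelmholtzSolution q k u) (hq : Integrable q)
    (hk : k ≠ 0) {L : ℂ}
    (hL : Tendsto (fun x : ℝ => exp (-(I * k * x)) * u x) atTop (𝓝 L)) :
    Tendsto (planeWaveAmplitude k u) atTop (𝓝 L) ∧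
      Tendsto (planeWaveAmplitude (-k) u) atTop (𝓝 0) := by
  have hbdd : IsBoundedUnder (· ≤ ·) atTop fun x => ‖u x‖ := by
    simpa only [norm_mul, norm_cexp_neg_I_mul, one_mul] using hL.norm.isBoundedUnder_le
  obtain ⟨A, hA⟩ := h.exists_tendsto_planeWaveAmplitude hq hk hbdd
  obtain ⟨B, hB⟩ := h.neg_wavenumber.exists_tendsto_planeWaveAmplitude hq (neg_ne_zero.2 hk) hbdd
  have hosc : Tendsto (fun x : ℝ => exp (I * (-2 * k : ℝ) * x) * planeWaveAmplitude (-k) u x) atTop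
      (𝓝 (L - A)) := by
    refine (hL.sub hA).congr fun x => ?_
    rw [← planeWaveAmplitude_add, add_sub_cancel_left]
    push_cast
    ring_nf
  obtain ⟨rfl, hLA⟩ := eq_zero_of_tendsto_of_tendsto_cexp_mul (by simpa using hk) hB hosc
  exact ⟨sub_eq_zero.1 hLA ▸ hA, hB⟩

lemma tendsto_planeWaveAmplitude_atBot (h : IsHelmholtzSolution q k u) (hq : Integrable q)
    (hk : k ≠ 0) {L : ℂ}
    (hL : Tendsto (fun x : ℝ => exp (I * k * x) * u x) atBot (𝓝 L)) :
    Tendsto (planeWaveAmplitude (-k) u) atBot (𝓝 L) ∧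
      Tendsto (planeWaveAmplitude k u) atBot (𝓝 0) := by
  have hLneg : Tendsto (fun x : ℝ => exp (-(I * k * x)) * u (-x)) atTop (𝓝 L) := by
    simpa only [Function.comp_def, ofReal_neg, mul_neg] using hL.comp tendsto_neg_atTop_atBot
  obtain ⟨hα, hβ⟩ := h.comp_neg.tendsto_planeWaveAmplitude_atTop hq.comp_neg hk hLneg
  constructor
  · simpa only [Function.comp_def, planeWaveAmplitude_comp_neg, neg_neg] using
      hα.comp tendsto_neg_atBot_atTop
  · simpa only [Function.comp_def, planeWaveAmplitude_comp_neg, neg_neg] using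
      hβ.comp tendsto_neg_atBot_atTop

lemma tendsto_planeWaveAmplitude_linearCombination_conj_atBot (h : IsHelmholtzSolution q k u)
    (hq : Integrable q) (hk : k ≠ 0) {L : ℂ}
    (hL : Tendsto (fun x : ℝ => exp (I * k * x) * u x) atBot (𝓝 L)) (a b : ℂ) :
    Tendsto (planeWaveAmplitude k fun x => a * u x + b * conj (u x)) atBot (𝓝 (b * conj L)) ∧
      Tendsto (planeWaveAmplitude (-k) fun x => a * u x + b * conj (u x)) atBot (𝓝 (a * L)) := by
  obtain ⟨hβ, hα⟩ := h.tendsto_planeWaveAmplitude_atBot hq hk hL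
  have hu : Differentiable ℝ u := h.contDiff.differentiable one_ne_zero
  have hsplit (κ : ℝ) : planeWaveAmplitude κ (fun x => a * u x + b * conj (u x)) =
      fun x => a * planeWaveAmplitude κ u x + b * conj (planeWaveAmplitude (-κ) u x) := by
    ext x
    rw [← planeWaveAmplitude_conj]
    exact planeWaveAmplitude_linearCombination hu hu.star a b κ x
  constructor
  · simpa [hsplit] using (hα.const_mul a).add (hβ.star.const_mul b)
  · simpa [hsplit] using (hβ.const_mul a).add (hα.star.const_mul b)

end IsHelmholtzSolution

lemma ne_zero_of_norm_planeWaveAmplitude_lt {x : ℝ}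
    (h : ‖planeWaveAmplitude (-k) u x‖ < ‖planeWaveAmplitude k u x‖) : u x ≠ 0 := by
  intro hu
  have hadd := planeWaveAmplitude_add k u x
  rw [hu, mul_zero, add_eq_zero_iff_eq_neg] at hadd
  rw [hadd, norm_neg, norm_mul, norm_cexp_neg_two_I_mul, one_mul] at h
  exact h.false

lemma rJost_eq (hk : k ≠ 0) {x : ℝ} (hu : u x ≠ 0) :
    rJost k u x =
      exp (-(2 * I * k * x)) * planeWaveAmplitude (-k) u x / planeWaveAmplitude k u x := by
  have hk' : (k : ℂ) ≠ 0 := ofReal_ne_zero.2 hk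
  have hβ : exp (-(2 * I * k * x)) * planeWaveAmplitude (-k) u x =
      exp (-(I * k * x)) * u x / 2 * (1 - wJost k u x) := by
    simp only [planeWaveAmplitude, wJost, if_neg hk', ofReal_neg, mul_neg, neg_mul, neg_neg]
    rw [← cexp_neg_two_I_mul_mul_cexp_I_mul]
    field_simp
    ring
  have hα : planeWaveAmplitude k u x = exp (-(I * k * x)) * u x / 2 * (1 + wJost k u x) := by
    simp only [planeWaveAmplitude, wJost, if_neg hk']
    field_simp
  have hne : exp (-(I * k * x)) * u x / 2 ≠ 0 := by simp [exp_ne_zero, hu]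
  rw [hβ, hα, mul_div_mul_left _ _ hne, rJost]

section PositiveFlux

variable (hk : k ≠ 0) (hpos : ∀ x, ‖planeWaveAmplitude (-k) u x‖ < ‖planeWaveAmplitude k u x‖)
include hk hpos

lemma norm_rJost_le_one (x : ℝ) : ‖rJost k u x‖ ≤ 1 := by
  rw [rJost_eq hk (ne_zero_of_norm_planeWaveAmplitude_lt (hpos x)), norm_div, norm_mul,
    norm_cexp_neg_two_I_mul, one_mul]
  exact div_le_one_of_le₀ (hpos x).le (norm_nonneg _)

lemma one_add_rJost_mul_planeWaveAmplitude (x : ℝ) :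
    (1 + rJost k u x) * planeWaveAmplitude k u x = exp (-(I * k * x)) * u x := by
  have hα : planeWaveAmplitude k u x ≠ 0 := norm_pos_iff.1 ((norm_nonneg _).trans_lt (hpos x))
  rw [rJost_eq hk (ne_zero_of_norm_planeWaveAmplitude_lt (hpos x)), add_mul, one_mul,
    div_mul_cancel₀ _ hα, planeWaveAmplitude_add]

lemma continuous_rJost (hu : ContDiff ℝ 1 u) : Continuous (rJost k u) := by
  have hr (x : ℝ) := rJost_eq hk (ne_zero_of_norm_planeWaveAmplitude_lt (hpos x))
  have hα := continuous_planeWaveAmplitude hu k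
  have hβ := continuous_planeWaveAmplitude hu (-k)
  rw [show rJost k u = _ from funext hr]
  exact .div (by fun_prop) hα fun x => norm_pos_iff.1 ((norm_nonneg _).trans_lt (hpos x))

lemma integrable_mul_one_add_rJost (hu : ContDiff ℝ 1 u) (hq : Integrable q) :
    Integrable fun x => -(I * k / 2 * q x) * (1 + rJost k u x) := by
  refine Integrable.mul_bdd (c := 1 + 1) (hq.ofReal.const_mul (I * k / 2)).neg
    (continuous_const.add (continuous_rJost hk hpos hu)).aestronglyMeasurable
    (.of_forall fun x => ?_)
  exact (norm_add_le _ _).trans (add_le_add norm_one.le (norm_rJost_le_one hk hpos x))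

lemma IsHelmholtzSolution.eq_cexp_integral_mul_of_tendsto (h : IsHelmholtzSolution q k u)
    (hq : Integrable q) {A B : ℂ} (hA : Tendsto (planeWaveAmplitude k u) atBot (𝓝 A))
    (hB : Tendsto (planeWaveAmplitude k u) atTop (𝓝 B)) :
    B = exp (∫ x, -(I * k / 2 * q x) * (1 + rJost k u x)) * A := by
  have hode := (h.hasACDeriv_planeWaveAmplitude hq.locallyIntegrable hk).congr_deriv
    (g := fun x => -(I * k / 2 * q x) * (1 + rJost k u x) * planeWaveAmplitude k u x) fun x => by
      rw [← one_add_rJost_mul_planeWaveAmplitude hk hpos, mul_assoc]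
  exact hode.eq_cexp_integral_mul_of_tendsto
    (integrable_mul_one_add_rJost hk hpos h.contDiff hq) hA hB

end PositiveFlux

lemma norm_cexp_integral_mul_one_add_sq {r : ℝ → ℂ}
    (hr : Integrable fun x => -(I * k / 2 * q x) * (1 + r x)) :
    ‖exp (∫ x, -(I * k / 2 * q x) * (1 + r x))‖ ^ 2 = Real.exp (∫ x, k * q x * (r x).im) := by
  have hre (x : ℝ) : 2 * (-(I * k / 2 * q x) * (1 + r x)).re = k * q x * (r x).im := by
    have : -(I * k / 2 * q x) * (1 + r x) = (-(k * q x / 2) : ℝ) * (I * (1 + r x)) := by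
      push_cast
      ring
    rw [this, re_ofReal_mul, I_mul_re, add_im, one_im]
    ring
  simp only [← hre]
  rw [norm_exp, ← Real.exp_nat_mul, integral_const_mul, Nat.cast_two]
  exact congrArg (fun t => Real.exp (2 * t)) (integral_re hr).symm

lemma neg_integral_sub_conj_eq (q : ℝ → ℝ) (k : ℝ) (r : ℝ → ℂ) :
    -∫ y : ℝ, I * k * q y / 2 * (r y - conj (r y)) = ↑(∫ y : ℝ, k * q y * (r y).im) := by
  rw [← integral_complex_ofReal, ← integral_neg]
  congr with y
  rw [sub_conj]
  push_cast
  linear_combination (-(k * q y * (r y).im) : ℂ) * I_sq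

theorem one_sub_R2_sq_general {q : ℝ → ℝ} (hq : Integrable q) {k : ℝ} (hk : k ≠ 0)
    {u₁ u₂ : ℝ → ℂ} (hu₁ : IsHelmholtzSolution q k u₁) (hu₂ : IsHelmholtzSolution q k u₂)
    (hlim₁ : Tendsto (fun x : ℝ => exp (-(I * k * x)) * u₁ x) atTop (𝓝 1))
    (hlim₂ : Tendsto (fun x : ℝ => exp (I * k * x) * u₂ x) atBot (𝓝 1))
    {T R₂ : ℂ} (hT : T ≠ 0) (hrel : ∀ x, u₁ x = R₂ / T * u₂ x + 1 / T * conj (u₂ x)) :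
    ((1 - ‖R₂‖ ^ 2 : ℝ) : ℂ) =
        exp (-∫ y : ℝ, I * k * q y / 2 * (rJost k u₁ y - conj (rJost k u₁ y))) ∧
      -∫ y : ℝ, I * k * q y / 2 * (rJost k u₁ y - conj (rJost k u₁ y)) =
        ↑(∫ y : ℝ, k * q y * (rJost k u₁ y).im) := by
  refine ⟨?_, neg_integral_sub_conj_eq q k _⟩
  obtain ⟨hα₁, hβ₁⟩ := hu₁.tendsto_planeWaveAmplitude_atTop hq hk hlim₁
  obtain ⟨hα, hβ⟩ :=
    hu₂.tendsto_planeWaveAmplitude_linearCombination_conj_atBot hq hk hlim₂ (R₂ / T) (1 / T)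
  simp only [← hrel, map_one, mul_one] at hα hβ
  have hflux := hu₁.norm_planeWaveAmplitude_sq_sub_eq_of_tendsto hq.locallyIntegrable hα₁ hβ₁
  have hunitary : 1 - ‖R₂‖ ^ 2 = ‖T‖ ^ 2 := by
    have hTnorm : ‖T‖ ≠ 0 := norm_ne_zero_iff.2 hT
    have := (hflux 0).symm.trans
      (hu₁.norm_planeWaveAmplitude_sq_sub_eq_of_tendsto hq.locallyIntegrable hα hβ 0)
    simp only [norm_div, norm_one, norm_zero] at this
    field_simp at this
    linarith
  have hpos (x : ℝ) : ‖planeWaveAmplitude (-k) u₁ x‖ < ‖planeWaveAmplitude k u₁ x‖ := by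
    refine lt_of_pow_lt_pow_left₀ 2 (norm_nonneg _) (sub_pos.1 ?_)
    simp [hflux x]
  have hTexp : T = exp (∫ x, -(I * k / 2 * q x) * (1 + rJost k u₁ x)) := by
    have := hu₁.eq_cexp_integral_mul_of_tendsto hk hpos hq hα hα₁
    rwa [mul_one_div, eq_comm, div_eq_one_iff_eq hT, eq_comm] at this
  rw [neg_integral_sub_conj_eq, hunitary, hTexp, norm_cexp_integral_mul_one_add_sq
    (integrable_mul_one_add_rJost hk hpos hu₁.contDiff hq), ofReal_exp]

end Helmholtz

lemma integrable_qfun {c : ℝ → ℝ} (hmeas : Measurable c) (h1 : HypH1 c) (h2 : HypH2 c) :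
    Integrable (qfun c) := by
  obtain ⟨c₀, hc₀, cM, hcM, hbound⟩ := h1
  obtain ⟨C, _, δ, hδ, hdecay⟩ := h2
  have hbracket : Integrable fun x : ℝ => (1 + x ^ 2) ^ (-(1 + δ) / 2) := by
    simpa only [Real.norm_eq_abs, sq_abs] using
      integrable_rpow_neg_one_add_norm_sq (E := ℝ) (μ := volume) (r := 1 + δ) (by simpa using hδ)
  have hqmeas : Measurable (qfun c) := by
    unfold qfun
    fun_prop
  refine (hbracket.const_mul ((cM + 1) / c₀ ^ 2 * C)).mono' hqmeas.aestronglyMeasurable ?_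
  filter_upwards [hbound, hdecay] with x ⟨hlower, hupper⟩ hx
  have hc : 0 < c x := hc₀.trans hlower
  have hfactor : qfun c x = (c x + 1) / c x ^ 2 * (c x - 1) := by
    rw [qfun]
    field_simp
    ring
  rw [hfactor, norm_mul, Real.norm_eq_abs, Real.norm_eq_abs, abs_of_pos (by positivity), mul_assoc]
  gcongr

lemma SolvesHelmholtz.isHelmholtzSolution {c : ℝ → ℝ} {k : ℝ} {u : ℝ → ℂ}
    (h : SolvesHelmholtz c k u) : IsHelmholtzSolution (qfun c) k u where
  contDiff := h.1
  integral_eq_sub a b := by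
    rw [h.2 a b, add_sub_cancel_left]
    refine intervalIntegral.integral_congr fun x _ => ?_
    simp only [qfun]
    push_cast
    ring

/-- `1 - |R₂(k)|² = exp(-∫ (ikq/2)(r - conj r))`, the exponent being the real number
`∫ k q Im r`. -/
theorem one_sub_R2_sq (c : ℝ → ℝ) (hmeas : Measurable c)
    (h1 : HypH1 c) (h2 : HypH2 c) (k : ℝ) (hk : k ≠ 0)
    (u₁ u₂ : ℝ → ℂ) (hu₁ : IsJostPlus c (k : ℂ) u₁) (hu₂ : IsJostMinus c (k : ℂ) u₂)
    (T R₂ : ℂ) (hT : T ≠ 0)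
    (hrel : ∀ x : ℝ, u₁ x = (R₂ / T) * u₂ x + (1 / T) * (starRingEnd ℂ) (u₂ x)) :
    (((1 - ‖R₂‖ ^ 2 : ℝ)) : ℂ) =
      Complex.exp (-∫ y : ℝ, (Complex.I * (k : ℂ) * ((qfun c y : ℝ) : ℂ) / 2) *
        (rJost (k : ℂ) u₁ y - (starRingEnd ℂ) (rJost (k : ℂ) u₁ y))) ∧
    (-∫ y : ℝ, (Complex.I * (k : ℂ) * ((qfun c y : ℝ) : ℂ) / 2) *
        (rJost (k : ℂ) u₁ y - (starRingEnd ℂ) (rJost (k : ℂ) u₁ y))) =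
      (((∫ y : ℝ, k * qfun c y * (rJost (k : ℂ) u₁ y).im : ℝ)) : ℂ) := by
  exact one_sub_R2_sq_general (integrable_qfun hmeas h1 h2) hk hu₁.1.isHelmholtzSolution
    hu₂.1.isHelmholtzSolution hu₁.2 hu₂.2 hT hrel
end
end
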